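/- arXiv:1508.06199 — 2 statements merged into one kernel-verified Lean document; each statement's English description precedes it below -/
import Mathlib

section
/- Let λ ∈ ℂ with 0 < Im λ < ρ and let f : (0,∞) → ℂ be measurable with ∫₀^∞ |f(s)| Δ(s) ds < ∞. Define the spherical transform f̂(μ) = ∫₀^∞ f(s) φ_μ(s) Δ(s) ds for μ ∈ ℂ with |Im μ| ≤ ρ. Then for every ξ ∈ ℝ, the integral ∫₀^∞ T_λf(t) φ_ξ(t) Δ(t) dt converges absolutely and equals (f̂(λ) − f̂(ξ))/(ξ² − λ²). -/
open Complex MeasureTheory Set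

noncomputable section

/-- Gauss hypergeometric function ₂F₁ as a power series sum. -/
def hyp (a b c x : ℂ) : ℂ :=
  ∑' n : ℕ, (ascPochhammer ℂ n).eval a * (ascPochhammer ℂ n).eval b /
    ((ascPochhammer ℂ n).eval c * (n.factorial : ℂ)) * x ^ n

/-- ρ = (m₁ + 2 m₂)/2 -/
def rho (m₁ m₂ : ℕ) : ℝ := ((m₁ : ℝ) + 2 * m₂) / 2

/-- Δ(t) = (2 sinh t)^(m₁+m₂) (2 cosh t)^(m₂) -/
def Del (m₁ m₂ : ℕ) (t : ℝ) : ℝ :=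
  (2 * Real.sinh t) ^ (m₁ + m₂) * (2 * Real.cosh t) ^ m₂

/-- The solution Φ_λ. -/
def Phi (m₁ m₂ : ℕ) (l : ℂ) (t : ℝ) : ℂ :=
  ((2 * Real.cosh t : ℝ) : ℂ) ^ (Complex.I * l - (rho m₁ m₂ : ℂ)) *
    hyp (((rho m₁ m₂ : ℂ) - Complex.I * l) / 2) (((m₁ : ℂ) + 2) / 4 - Complex.I * l / 2)
      (1 - Complex.I * l) ((((Real.cosh t) ^ 2 : ℝ) : ℂ))⁻¹

/-- The function b_λ. -/
def bfun (m₁ m₂ : ℕ) (l : ℂ) (t : ℝ) : ℂ :=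
  (2 : ℂ) ^ (-(rho m₁ m₂ : ℂ) - 1 - Complex.I * l) *
    (Complex.Gamma (((rho m₁ m₂ : ℂ) - Complex.I * l) / 2) *
      Complex.Gamma (((m₁ : ℂ) + 2) / 4 - Complex.I * l / 2) /
      (Complex.Gamma (((m₁ : ℂ) + (m₂ : ℂ) + 1) / 2) * Complex.Gamma (1 - Complex.I * l))) *
    Phi m₁ m₂ l t

/-- The elementary spherical function φ_λ. -/
def sph (m₁ m₂ : ℕ) (l : ℂ) (t : ℝ) : ℂ :=
  ((Real.cosh t : ℝ) : ℂ) ^ (-((rho m₁ m₂ : ℂ) + Complex.I * l)) *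
    hyp (((m₁ : ℂ) + 2) / 4 + Complex.I * l / 2) (((rho m₁ m₂ : ℂ) + Complex.I * l) / 2)
      (((m₁ : ℂ) + (m₂ : ℂ) + 1) / 2) (((Real.tanh t) ^ 2 : ℝ) : ℂ)

/-- The operator T_λ. -/
def Tfun (m₁ m₂ : ℕ) (l : ℂ) (f : ℝ → ℂ) (t : ℝ) : ℂ :=
  bfun m₁ m₂ l t * (∫ s in Set.Ioi t, f s * sph m₁ m₂ l s * (Del m₁ m₂ s : ℂ)) -
    sph m₁ m₂ l t * (∫ s in Set.Ioi t, f s * bfun m₁ m₂ l s * (Del m₁ m₂ s : ℂ))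

section

open Filter Topology

/-- The coefficients of the Gauss hypergeometric series. -/
def hypCoeff (a b c : ℂ) (n : ℕ) : ℂ :=
  (ascPochhammer ℂ n).eval a * (ascPochhammer ℂ n).eval b /
    ((ascPochhammer ℂ n).eval c * (n.factorial : ℂ))

/-- The coefficients of the binomial series of `(1 - x) ^ (-s)`. -/
def binomCoeff (s : ℝ) (n : ℕ) : ℝ := (ascPochhammer ℝ n).eval s / n.factorial

lemma ascPochhammer_eval_eq_prod {R : Type*} [CommSemiring R] (a : R) (n : ℕ) :
    (ascPochhammer R n).eval a = ∏ j ∈ Finset.range n, (a + j) := by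
  induction n with
  | zero => simp
  | succ n ih => rw [ascPochhammer_succ_eval, ih, Finset.prod_range_succ]

lemma tendsto_ascPochhammer_div (a : ℂ) :
    Tendsto (fun n : ℕ => (ascPochhammer ℂ (n + 1)).eval a / ((n : ℂ) ^ a * (n.factorial : ℂ)))
      atTop (𝓝 (Complex.Gamma a)⁻¹) := by
  have key : (fun n : ℕ => (ascPochhammer ℂ (n + 1)).eval a / ((n : ℂ) ^ a * (n.factorial : ℂ)))
      = fun n => (Complex.GammaSeq a n)⁻¹ := by
    funext n
    rw [Complex.GammaSeq, ascPochhammer_eval_eq_prod, inv_div]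
  by_cases h : ∃ k : ℕ, a = -k
  · obtain ⟨k, rfl⟩ := h
    rw [Complex.Gamma_neg_nat_eq_zero, inv_zero]
    refine tendsto_const_nhds.congr' ?_
    filter_upwards [eventually_ge_atTop k] with n hn
    rw [ascPochhammer_eval_eq_prod, Finset.prod_eq_zero (i := k)]
    · simp
    · simpa using Nat.lt_succ_of_le hn
    · simp
  · rw [key]
    push Not at h
    exact (Complex.GammaSeq_tendsto_Gamma a).inv₀ (Complex.Gamma_ne_zero h)

lemma norm_ascPochhammer_le (a : ℂ) : ∃ C : ℝ, 0 ≤ C ∧ ∀ n : ℕ, 1 ≤ n →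
    ‖(ascPochhammer ℂ (n + 1)).eval a‖ ≤ C * ((n : ℝ) ^ a.re * n.factorial) := by
  obtain ⟨C, hC⟩ := (tendsto_ascPochhammer_div a).norm.bddAbove_range
  refine ⟨C, (norm_nonneg _).trans (hC ⟨0, rfl⟩), fun n hn => ?_⟩
  have hpos : (0 : ℝ) < (n : ℝ) ^ a.re * n.factorial := by positivity
  have := hC ⟨n, rfl⟩
  simp only [norm_div, norm_mul, Complex.norm_natCast] at this
  rw [Complex.norm_natCast_cpow_of_pos (by omega)] at this
  rwa [div_le_iff₀ hpos] at this

lemma ascPochhammer_eval_ne_zero {c : ℂ} (hc : 0 < c.re) (n : ℕ) :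
    (ascPochhammer ℂ n).eval c ≠ 0 := by
  rw [ascPochhammer_eval_eq_prod, Finset.prod_ne_zero_iff]
  intro j _ h
  have := congrArg Complex.re h
  simp at this
  linarith [Nat.cast_nonneg (α := ℝ) j]

lemma le_norm_ascPochhammer {c : ℂ} (hc : 0 < c.re) : ∃ C : ℝ, 0 < C ∧ ∀ n : ℕ, 1 ≤ n →
    C * ((n : ℝ) ^ c.re * n.factorial) ≤ ‖(ascPochhammer ℂ (n + 1)).eval c‖ := by
  obtain ⟨C, hC⟩ := (Complex.GammaSeq_tendsto_Gamma c).norm.bddAbove_range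
  have hC0 : 0 ≤ C := (norm_nonneg _).trans (hC ⟨0, rfl⟩)
  refine ⟨(C + 1)⁻¹, by positivity, fun n hn => ?_⟩
  have := hC ⟨n, rfl⟩
  simp only [Complex.GammaSeq, ← ascPochhammer_eval_eq_prod, norm_div, norm_mul,
    Complex.norm_natCast] at this
  rw [Complex.norm_natCast_cpow_of_pos (by omega),
    div_le_iff₀ (norm_pos_iff.2 (ascPochhammer_eval_ne_zero hc _))] at this
  rw [inv_mul_le_iff₀ (by positivity)]
  nlinarith [norm_nonneg ((ascPochhammer ℂ (n + 1)).eval c)]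

lemma norm_hypCoeff_succ_le (a b : ℂ) {c : ℂ} (hc : 0 < c.re) : ∃ C : ℝ, 0 ≤ C ∧
    ∀ n : ℕ, 1 ≤ n → ‖hypCoeff a b c (n + 1)‖ ≤ C * (n : ℝ) ^ ((a + b - c).re - 1) := by
  obtain ⟨A, hA, hA'⟩ := norm_ascPochhammer_le a
  obtain ⟨B, hB, hB'⟩ := norm_ascPochhammer_le b
  obtain ⟨C, hC, hC'⟩ := le_norm_ascPochhammer hc
  refine ⟨A * B / C, by positivity, fun n hn => ?_⟩
  have hn0 : (0 : ℝ) < n := by exact_mod_cast hn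
  have hf : (0 : ℝ) < n.factorial := by positivity
  simp only [hypCoeff, norm_div, norm_mul, Complex.norm_natCast]
  have e : A * B / C * (n : ℝ) ^ ((a + b - c).re - 1) =
      (A * ((n : ℝ) ^ a.re * n.factorial)) * (B * ((n : ℝ) ^ b.re * n.factorial)) /
        ((C * ((n : ℝ) ^ c.re * n.factorial)) * (n * n.factorial)) := by
    rw [Complex.sub_re, Complex.add_re, Real.rpow_sub hn0, Real.rpow_sub hn0, Real.rpow_add hn0,
      Real.rpow_one]
    field_simp
  rw [e]
  have h1 : (n : ℝ) * n.factorial ≤ ((n + 1).factorial : ℝ) := by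
    rw [Nat.factorial_succ]; push_cast; nlinarith
  have := hA' n hn
  have := hB' n hn
  have := hC' n hn
  gcongr

lemma binomCoeff_pos {s : ℝ} (hs : 0 < s) (n : ℕ) : 0 < binomCoeff s n :=
  div_pos (ascPochhammer_pos n s hs) (by positivity)

lemma ascPochhammer_eval_ofReal (s : ℝ) (n : ℕ) :
    (ascPochhammer ℂ n).eval (s : ℂ) = (((ascPochhammer ℝ n).eval s : ℝ) : ℂ) := by
  simp [ascPochhammer_eval_eq_prod]

lemma le_binomCoeff_succ {s : ℝ} (hs : 0 < s) : ∃ C : ℝ, 0 < C ∧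
    ∀ n : ℕ, 1 ≤ n → C * (n : ℝ) ^ (s - 1) ≤ binomCoeff s (n + 1) := by
  obtain ⟨C, hC, hC'⟩ := le_norm_ascPochhammer (c := (s : ℂ)) (by simpa using hs)
  refine ⟨C / 2, by positivity, fun n hn => ?_⟩
  have hn0 : (0 : ℝ) < n := by exact_mod_cast hn
  have hn1 : (1 : ℝ) ≤ n := by exact_mod_cast hn
  have hf : (0 : ℝ) < n.factorial := by positivity
  have := hC' n hn
  rw [ascPochhammer_eval_ofReal, Complex.norm_real, Real.norm_of_nonneg
    (ascPochhammer_pos _ s hs).le, Complex.ofReal_re] at this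
  have e : C / 2 * (n : ℝ) ^ (s - 1) =
      (C * ((n : ℝ) ^ s * n.factorial)) / (2 * n * n.factorial) := by
    rw [Real.rpow_sub hn0, Real.rpow_one]
    field_simp
  have h1 : ((n + 1).factorial : ℝ) ≤ 2 * n * n.factorial := by
    rw [Nat.factorial_succ]; push_cast; nlinarith
  rw [e, binomCoeff]
  have := ascPochhammer_pos (n + 1) s hs
  gcongr

lemma norm_hypCoeff_le (a b : ℂ) {c : ℂ} {s : ℝ} (hc : 0 < c.re) (hs : 0 < s)
    (h : (a + b - c).re ≤ s) :
    ∃ C : ℝ, 0 ≤ C ∧ ∀ n : ℕ, ‖hypCoeff a b c n‖ ≤ C * binomCoeff s n := by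
  obtain ⟨A, hA, hA'⟩ := norm_hypCoeff_succ_le a b hc
  obtain ⟨B, hB, hB'⟩ := le_binomCoeff_succ hs
  refine ⟨A / B + ‖hypCoeff a b c 0‖ / binomCoeff s 0 + ‖hypCoeff a b c 1‖ / binomCoeff s 1,
    ?_, fun n => ?_⟩
  · have := binomCoeff_pos hs 0
    have := binomCoeff_pos hs 1
    positivity
  have h0 := binomCoeff_pos hs 0
  have h1 := binomCoeff_pos hs 1
  have hn := binomCoeff_pos hs n
  rcases n with _ | _ | n
  · rw [add_mul, add_mul, div_mul_cancel₀ _ h0.ne']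
    have : 0 ≤ A / B * binomCoeff s 0 + ‖hypCoeff a b c 1‖ / binomCoeff s 1 * binomCoeff s 0 := by
      positivity
    linarith
  · rw [add_mul, add_mul, zero_add, div_mul_cancel₀ _ h1.ne']
    have : 0 ≤ A / B * binomCoeff s 1 + ‖hypCoeff a b c 0‖ / binomCoeff s 0 * binomCoeff s 1 := by
      positivity
    linarith
  · have e1 := hA' (n + 1) (by omega)
    have e2 := hB' (n + 1) (by omega)
    have e3 : ((n + 1 : ℕ) : ℝ) ^ ((a + b - c).re - 1) ≤ ((n + 1 : ℕ) : ℝ) ^ (s - 1) :=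
      Real.rpow_le_rpow_of_exponent_le (by push_cast; linarith [Nat.cast_nonneg (α := ℝ) n])
        (by linarith)
    have e4 : A * ((n + 1 : ℕ) : ℝ) ^ ((a + b - c).re - 1) ≤
        A / B * binomCoeff s (n + 1 + 1) := by
      calc _ ≤ A * ((n + 1 : ℕ) : ℝ) ^ (s - 1) := by gcongr
        _ = A / B * (B * ((n + 1 : ℕ) : ℝ) ^ (s - 1)) := by field_simp
        _ ≤ _ := by gcongr
    have : 0 ≤ ‖hypCoeff a b c 0‖ / binomCoeff s 0 * binomCoeff s (n + 1 + 1)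
        + ‖hypCoeff a b c 1‖ / binomCoeff s 1 * binomCoeff s (n + 1 + 1) := by positivity
    rw [add_mul, add_mul]
    linarith

lemma summable_norm_hypCoeff {a b c : ℂ} (hc : 0 < c.re) (h : (a + b - c).re < 0) :
    Summable fun n => ‖hypCoeff a b c n‖ := by
  obtain ⟨A, hA, hA'⟩ := norm_hypCoeff_succ_le a b hc
  rw [← summable_nat_add_iff 2]
  have h2 : Summable fun n : ℕ => A * ((n + 1 : ℕ) : ℝ) ^ ((a + b - c).re - 1) :=
    ((summable_nat_add_iff (f := fun n : ℕ => (n : ℝ) ^ ((a + b - c).re - 1)) 1).2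
      (Real.summable_nat_rpow.2 (by linarith))).mul_left A
  exact Summable.of_nonneg_of_le (fun n => norm_nonneg _) (fun n => hA' (n + 1) (by omega)) h2

lemma hasSum_binomCoeff (s : ℝ) {x : ℝ} (hx : |x| < 1) :
    HasSum (fun n => binomCoeff s n * x ^ n) ((1 - x) ^ s)⁻¹ := by
  have := (Real.one_div_one_sub_rpow_hasFPowerSeriesOnBall_zero s).hasSum (y := x)
    (by simpa [← ofReal_norm] using hx)
  simp only [zero_add, one_div, FormalMultilinearSeries.ofScalars_apply_eq, smul_eq_mul] at this
  have e : ∀ n : ℕ, binomCoeff s n = Ring.choose (s + n - 1) n := fun n => by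
    have h2 := Ring.factorial_nsmul_multichoose_eq_ascPochhammer s n
    rw [Polynomial.ascPochhammer_smeval_eq_eval, nsmul_eq_mul] at h2
    rw [← Ring.multichoose_eq, binomCoeff, ← h2]
    field_simp
  simpa only [e, mul_comm] using this

lemma tendsto_hypCoeff_div {a b c : ℂ} {s : ℝ} (hc : 0 < c.re) (hs : 0 < s)
    (h : a + b - c = s) :
    Tendsto (fun n => hypCoeff a b c n / binomCoeff s n) atTop
      (𝓝 (Complex.Gamma c * Complex.Gamma s / (Complex.Gamma a * Complex.Gamma b))) := by
  rw [← tendsto_add_atTop_iff_nat 1]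
  have hc' : Complex.Gamma c ≠ 0 := Complex.Gamma_ne_zero_of_re_pos hc
  have hs' : Complex.Gamma s ≠ 0 := Complex.Gamma_ne_zero_of_re_pos (by simpa using hs)
  have := ((tendsto_ascPochhammer_div a).mul (tendsto_ascPochhammer_div b)).div
    ((tendsto_ascPochhammer_div c).mul (tendsto_ascPochhammer_div s))
    (mul_ne_zero (inv_ne_zero hc') (inv_ne_zero hs'))
  convert this.congr' ?_ using 2
  · field_simp
  filter_upwards [eventually_ge_atTop 1] with n hn
  have hn0 : (n : ℂ) ≠ 0 := by exact_mod_cast (by omega : n ≠ 0)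
  have hp : (n : ℂ) ^ a * (n : ℂ) ^ b = (n : ℂ) ^ c * (n : ℂ) ^ (s : ℂ) := by
    rw [← Complex.cpow_add _ _ hn0, ← Complex.cpow_add _ _ hn0]
    congr 1; linear_combination h
  have hna : (n : ℂ) ^ a ≠ 0 := by simp [Complex.cpow_eq_zero_iff, hn0]
  have hnb : (n : ℂ) ^ b ≠ 0 := by simp [Complex.cpow_eq_zero_iff, hn0]
  have hnc : (n : ℂ) ^ c ≠ 0 := by simp [Complex.cpow_eq_zero_iff, hn0]
  have hns : (n : ℂ) ^ (s : ℂ) ≠ 0 := by simp [Complex.cpow_eq_zero_iff, hn0]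
  have hf : (n.factorial : ℂ) ≠ 0 := by exact_mod_cast n.factorial_ne_zero
  have hf1 : ((n + 1).factorial : ℂ) ≠ 0 := by exact_mod_cast (n + 1).factorial_ne_zero
  have hpc := ascPochhammer_eval_ne_zero hc (n + 1)
  have hps := ascPochhammer_eval_ne_zero (c := s) (by simpa using hs) (n + 1)
  rw [hypCoeff, binomCoeff, Complex.ofReal_div, ← ascPochhammer_eval_ofReal]
  simp only [Complex.ofReal_natCast, Pi.div_apply]
  generalize (ascPochhammer ℂ (n + 1)).eval a = pa at *
  generalize (ascPochhammer ℂ (n + 1)).eval b = pb at *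
  generalize (ascPochhammer ℂ (n + 1)).eval c = pc at *
  generalize (ascPochhammer ℂ (n + 1)).eval (s : ℂ) = ps at *
  have : pa / ((n : ℂ) ^ a * n.factorial) * (pb / ((n : ℂ) ^ b * n.factorial)) =
    pa * pb / (((n : ℂ) ^ a * (n : ℂ) ^ b) * n.factorial ^ 2) := by field_simp
  rw [this, hp]
  field_simp

lemma hyp_eq_tsum (a b c x : ℂ) : hyp a b c x = ∑' n, hypCoeff a b c n * x ^ n := rfl

lemma summable_norm_hypCoeff_mul_pow (a b : ℂ) {c : ℂ} (hc : 0 < c.re) {r : ℝ} (hr : 0 ≤ r)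
    (hr1 : r < 1) : Summable fun n => ‖hypCoeff a b c n‖ * r ^ n := by
  obtain ⟨C, hC, hC'⟩ := norm_hypCoeff_le a b (s := max 1 (a + b - c).re) hc (by positivity)
    (le_max_right _ _)
  refine Summable.of_nonneg_of_le (fun n => by positivity) (fun n => ?_)
    ((hasSum_binomCoeff (max 1 (a + b - c).re)
      (by rwa [abs_of_nonneg hr])).summable.mul_left C)
  rw [← mul_assoc]
  exact mul_le_mul_of_nonneg_right (hC' n) (by positivity)

lemma hasSum_hyp (a b : ℂ) {c x : ℂ} (hc : 0 < c.re) (hx : ‖x‖ < 1) :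
    HasSum (fun n => hypCoeff a b c n * x ^ n) (hyp a b c x) := by
  refine Summable.hasSum (Summable.of_norm ?_)
  simpa using summable_norm_hypCoeff_mul_pow a b hc (norm_nonneg x) hx

lemma ascPochhammer_succ_eval_left (a : ℂ) (n : ℕ) :
    (ascPochhammer ℂ (n + 1)).eval a = a * (ascPochhammer ℂ n).eval (a + 1) := by
  rw [ascPochhammer_eval_eq_prod, ascPochhammer_eval_eq_prod, Finset.prod_range_succ', mul_comm,
    Nat.cast_zero, add_zero]
  congr 1
  refine Finset.prod_congr rfl fun j _ => ?_
  push_cast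
  ring

lemma hypCoeff_shift (a b : ℂ) {c : ℂ} (hc : 0 < c.re) (n : ℕ) :
    (n + 1) * hypCoeff a b c (n + 1) =
      a * b / c * hypCoeff (a + 1) (b + 1) (c + 1) n := by
  have h0 : c ≠ 0 := by rintro rfl; simp at hc
  have h1 := ascPochhammer_eval_ne_zero (c := c + 1) (by simp; linarith) n
  have hf : (n.factorial : ℂ) ≠ 0 := by exact_mod_cast n.factorial_ne_zero
  have hn : (n : ℂ) + 1 ≠ 0 := by exact_mod_cast n.succ_ne_zero
  simp only [hypCoeff, ascPochhammer_succ_eval_left, Nat.factorial_succ, Nat.cast_mul,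
    Nat.cast_add, Nat.cast_one]
  field_simp

lemma hypCoeff_succ (a b : ℂ) {c : ℂ} (hc : 0 < c.re) (n : ℕ) :
    (n + c) * ((n + 1) * hypCoeff a b c (n + 1)) = (n + a) * (n + b) * hypCoeff a b c n := by
  have h0 : c + n ≠ 0 := by
    intro h
    have := congrArg Complex.re h
    simp at this
    linarith [Nat.cast_nonneg (α := ℝ) n]
  have h1 := ascPochhammer_eval_ne_zero hc n
  have hf : (n.factorial : ℂ) ≠ 0 := by exact_mod_cast n.factorial_ne_zero
  have hn : (n : ℂ) + 1 ≠ 0 := by exact_mod_cast n.succ_ne_zero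
  simp only [hypCoeff, ascPochhammer_succ_eval, Nat.factorial_succ, Nat.cast_mul,
    Nat.cast_add, Nat.cast_one]
  field_simp
  ring

lemma hasDerivAt_hyp (a b : ℂ) {c x : ℂ} (hc : 0 < c.re) (hx : ‖x‖ < 1) :
    HasDerivAt (hyp a b c) (a * b / c * hyp (a + 1) (b + 1) (c + 1) x) x := by
  obtain ⟨r, hxr, hr1⟩ := exists_between hx
  have hr0 : 0 ≤ r := (norm_nonneg x).trans hxr.le
  have hc1 : 0 < (c + 1).re := by simp; linarith
  have hsum : Summable fun n : ℕ => ‖hypCoeff a b c n‖ * (n * r ^ (n - 1)) := by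
    rw [← summable_nat_add_iff 1]
    refine ((summable_norm_hypCoeff_mul_pow (a + 1) (b + 1) hc1 hr0 hr1).mul_left
      ‖a * b / c‖).congr fun n => ?_
    rw [← mul_assoc, ← norm_mul, ← hypCoeff_shift a b hc, norm_mul]
    have : ‖(n : ℂ) + 1‖ = n + 1 := by exact_mod_cast Complex.norm_natCast (n + 1)
    rw [this]
    push_cast [Nat.add_sub_cancel]
    ring
  have key := hasDerivAt_tsum_of_isPreconnected (𝕜 := ℂ)
    (g := fun n y => hypCoeff a b c n * y ^ n)
    (g' := fun n y => hypCoeff a b c n * (n * y ^ (n - 1))) (y₀ := x) (y := x)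
    (t := Metric.ball (0 : ℂ) r) hsum Metric.isOpen_ball
    (convex_ball (0 : ℂ) r).isPreconnected
    (fun n y _ => (hasDerivAt_pow n y).const_mul _)
    (fun n y hy => by
      rw [mem_ball_zero_iff] at hy
      rw [norm_mul, norm_mul, norm_pow, Complex.norm_natCast]
      gcongr)
    (by simpa using hxr) (hasSum_hyp a b hc hx).summable (by simpa using hxr)
  have hs : Summable fun n : ℕ => hypCoeff a b c n * (n * x ^ (n - 1)) := by
    refine Summable.of_norm_bounded hsum fun n => ?_
    rw [norm_mul, norm_mul, norm_pow, Complex.norm_natCast]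
    gcongr
  suffices e : a * b / c * hyp (a + 1) (b + 1) (c + 1) x =
      ∑' n : ℕ, hypCoeff a b c n * (n * x ^ (n - 1)) by
    rw [e]; exact key
  rw [hyp_eq_tsum, ← tsum_mul_left, hs.tsum_eq_zero_add]
  simp only [Nat.cast_zero, zero_mul, mul_zero, zero_add]
  congr 1
  funext n
  rw [← mul_assoc, ← hypCoeff_shift a b hc]
  push_cast [Nat.add_sub_cancel]
  ring

lemma hasSum_mul_index {q : ℕ → ℂ} {x S : ℂ}
    (h : HasSum (fun n : ℕ => (n + 1) * q (n + 1) * x ^ n) S) :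
    HasSum (fun n : ℕ => n * q n * x ^ n) (x * S) := by
  rw [← hasSum_nat_add_iff' 1]
  simp only [Finset.range_one, Finset.sum_singleton, Nat.cast_zero, zero_mul, sub_zero]
  refine (h.mul_left x).congr_fun fun n => ?_
  push_cast
  ring

/-- The hypergeometric differential equation. -/
lemma hyp_ode (a b : ℂ) {c x : ℂ} (hc : 0 < c.re) (hx : ‖x‖ < 1) :
    x * (1 - x) * (a * b / c * ((a + 1) * (b + 1) / (c + 1) *
        hyp (a + 1 + 1) (b + 1 + 1) (c + 1 + 1) x)) +
      (c - (a + b + 1) * x) * (a * b / c * hyp (a + 1) (b + 1) (c + 1) x) -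
      a * b * hyp a b c x = 0 := by
  have hc1 : 0 < (c + 1).re := by simp; linarith
  have hc2 : 0 < (c + 1 + 1).re := by simp; linarith
  have h0 := hasSum_hyp a b hc hx
  have h1 : HasSum (fun n : ℕ => (n + 1) * hypCoeff a b c (n + 1) * x ^ n)
      (a * b / c * hyp (a + 1) (b + 1) (c + 1) x) := by
    simp only [hypCoeff_shift a b hc, mul_assoc]
    simpa only [mul_assoc] using (hasSum_hyp (a + 1) (b + 1) hc1 hx).mul_left (a * b / c)
  have h2 : HasSum (fun n : ℕ => (n + 1) *
        (((n + 1 : ℕ) + 1) * hypCoeff a b c (n + 1 + 1)) * x ^ n)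
      (a * b / c * ((a + 1) * (b + 1) / (c + 1) *
        hyp (a + 1 + 1) (b + 1 + 1) (c + 1 + 1) x)) := by
    have := ((hasSum_hyp (a + 1 + 1) (b + 1 + 1) hc2 hx).mul_left
      ((a + 1) * (b + 1) / (c + 1))).mul_left (a * b / c)
    refine this.congr_fun fun n => ?_
    have e1 := hypCoeff_shift a b hc (n + 1)
    have e2 := hypCoeff_shift (a + 1) (b + 1) hc1 n
    rw [e1]
    linear_combination (a * b / c * x ^ n) * e2
  have h3 := hasSum_mul_index h1
  have h4 := hasSum_mul_index (q := fun n => ((n : ℂ) + 1) * hypCoeff a b c (n + 1)) h2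
  have h5 := hasSum_mul_index (q := fun n => ((n : ℂ) - 1) * hypCoeff a b c n) (x := x)
    (S := x * (a * b / c * ((a + 1) * (b + 1) / (c + 1) *
        hyp (a + 1 + 1) (b + 1 + 1) (c + 1 + 1) x))) (h4.congr_fun fun n => by
      push_cast; ring)
  have h := (((h4.sub h5).add (h1.mul_left c)).sub (h3.mul_left (a + b + 1))).sub
    (h0.mul_left (a * b))
  have hz : HasSum (fun _ : ℕ => (0 : ℂ)) _ := h.congr_fun fun n => by
    have := hypCoeff_succ a b hc n
    linear_combination (-x ^ n) * this
  have := hz.unique hasSum_zero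
  rw [← this]
  ring

lemma norm_hyp_le_mul (a b : ℂ) {c : ℂ} {s : ℝ} (hc : 0 < c.re) (hs : 0 < s)
    (h : (a + b - c).re ≤ s) : ∃ C : ℝ, 0 ≤ C ∧ ∀ x : ℝ, 0 ≤ x → x < 1 →
      ‖hyp a b c x‖ ≤ C * ((1 - x) ^ s)⁻¹ := by
  obtain ⟨C, hC, hC'⟩ := norm_hypCoeff_le a b hc hs h
  refine ⟨C, hC, fun x hx hx1 => ?_⟩
  have h1 := (hasSum_binomCoeff s (x := x) (by rwa [abs_of_nonneg hx])).mul_left C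
  rw [hyp_eq_tsum]
  refine tsum_of_norm_bounded h1 fun n => ?_
  rw [norm_mul, norm_pow, Complex.norm_real, Real.norm_of_nonneg hx, ← mul_assoc]
  exact mul_le_mul_of_nonneg_right (hC' n) (by positivity)

lemma norm_hyp_le {a b c : ℂ} (hc : 0 < c.re) (h : (a + b - c).re < 0) :
    ∃ C : ℝ, 0 ≤ C ∧ ∀ x : ℝ, 0 ≤ x → x < 1 → ‖hyp a b c x‖ ≤ C := by
  have hs := summable_norm_hypCoeff hc h
  refine ⟨∑' n, ‖hypCoeff a b c n‖, tsum_nonneg fun _ => norm_nonneg _, fun x hx hx1 => ?_⟩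
  rw [hyp_eq_tsum]
  refine tsum_of_norm_bounded hs.hasSum fun n => ?_
  rw [norm_mul, norm_pow, Complex.norm_real, Real.norm_of_nonneg hx]
  exact mul_le_of_le_one_right (norm_nonneg _) (pow_le_one₀ hx hx1.le)

/-- Gauss's asymptotics of the hypergeometric function at `1` in the divergent case. -/
lemma tendsto_hyp_one {a b c : ℂ} {s : ℝ} (hc : 0 < c.re) (hs : 0 < s) (h : a + b - c = s) :
    Tendsto (fun x : ℝ => (((1 - x) ^ s : ℝ) : ℂ) * hyp a b c x) (𝓝[<] 1)
      (𝓝 (Complex.Gamma c * Complex.Gamma s / (Complex.Gamma a * Complex.Gamma b))) := by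
  set K := Complex.Gamma c * Complex.Gamma s / (Complex.Gamma a * Complex.Gamma b)
  rw [Metric.tendsto_nhds]
  intro ε hε
  have h1 := (Metric.tendsto_atTop.1 (tendsto_hypCoeff_div hc hs h)) (ε / 2) (by positivity)
  obtain ⟨N, hN⟩ := h1
  set M : ℝ := ∑ n ∈ Finset.range N, ‖hypCoeff a b c n - K * binomCoeff s n‖
  have hpow : Tendsto (fun x : ℝ => (1 - x) ^ s * M) (𝓝[<] 1) (𝓝 0) := by
    have : ContinuousAt (fun x : ℝ => (1 - x) ^ s * M) 1 := by
      refine ContinuousAt.mul ?_ continuousAt_const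
      exact ContinuousAt.rpow_const (by fun_prop) (Or.inr hs.le)
    have h2 := this.tendsto
    simp only [sub_self, Real.zero_rpow hs.ne', zero_mul] at h2
    exact h2.mono_left nhdsWithin_le_nhds
  have hpow2 := hpow.eventually (gt_mem_nhds (show (0 : ℝ) < ε / 2 by positivity))
  have hpos : ∀ᶠ x : ℝ in 𝓝[<] 1, 0 < x :=
    (lt_mem_nhds one_pos).filter_mono nhdsWithin_le_nhds
  filter_upwards [hpow2, hpos, self_mem_nhdsWithin] with x hx hx0 hx1
  have hx1 : x < 1 := hx1
  have hw : 0 < (1 - x) ^ s := Real.rpow_pos_of_pos (by linarith) s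
  have hb := hasSum_binomCoeff s (x := x) (by rwa [abs_of_nonneg hx0.le])
  have hbC := Complex.hasSum_ofReal.2 hb
  have hh := hasSum_hyp a b (c := c) (x := x) hc
    (by rwa [Complex.norm_real, Real.norm_of_nonneg hx0.le])
  have hd := hh.sub (hbC.mul_left K)
  have hbound : ‖hyp a b c x - K * ((((1 - x) ^ s)⁻¹ : ℝ) : ℂ)‖ ≤
      M + ε / 2 * ((1 - x) ^ s)⁻¹ := by
    have hfin : HasSum (fun n => if n ∈ Finset.range N then
        ‖hypCoeff a b c n - K * binomCoeff s n‖ else 0) M := by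
      have := hasSum_sum_of_ne_finset_zero
        (L := SummationFilter.unconditional ℕ) (s := Finset.range N) (f := fun n =>
        if n ∈ Finset.range N then ‖hypCoeff a b c n - K * binomCoeff s n‖ else 0)
        (fun n hn => if_neg hn)
      rwa [Finset.sum_ite_mem, Finset.inter_self] at this
    rw [← hd.tsum_eq]
    refine tsum_of_norm_bounded (hfin.add (hb.mul_left (ε / 2))) fun n => ?_
    have e : hypCoeff a b c n * (x : ℂ) ^ n - K * ((binomCoeff s n * x ^ n : ℝ) : ℂ) =
        (hypCoeff a b c n - K * binomCoeff s n) * (x : ℂ) ^ n := by push_cast; ring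
    rw [e, norm_mul, norm_pow, Complex.norm_real, Real.norm_of_nonneg hx0.le]
    have hp1 : x ^ n ≤ 1 := pow_le_one₀ hx0.le hx1.le
    have hbn := binomCoeff_pos hs n
    by_cases hn : n ∈ Finset.range N
    · rw [if_pos hn]
      have : 0 ≤ ε / 2 * (binomCoeff s n * x ^ n) := by positivity
      have := mul_le_of_le_one_right (norm_nonneg (hypCoeff a b c n - K * binomCoeff s n)) hp1
      linarith
    · rw [if_neg hn, zero_add, ← mul_assoc]
      refine mul_le_mul_of_nonneg_right ?_ (by positivity)
      have h3 := hN n (by simpa using hn)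
      have hbn' : (binomCoeff s n : ℂ) ≠ 0 := by exact_mod_cast hbn.ne'
      rw [dist_eq_norm] at h3
      have e2 : hypCoeff a b c n - K * binomCoeff s n =
          (hypCoeff a b c n / binomCoeff s n - K) * binomCoeff s n := by field_simp
      rw [e2, norm_mul, Complex.norm_real, Real.norm_of_nonneg hbn.le]
      gcongr
  have hwC : (((1 - x) ^ s : ℝ) : ℂ) ≠ 0 := by exact_mod_cast hw.ne'
  have e : (((1 - x) ^ s : ℝ) : ℂ) * hyp a b c x - K = (((1 - x) ^ s : ℝ) : ℂ) *
      (hyp a b c x - K * ((((1 - x) ^ s)⁻¹ : ℝ) : ℂ)) := by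
    rw [Complex.ofReal_inv]; field_simp
  rw [dist_eq_norm, e, norm_mul, Complex.norm_real, Real.norm_of_nonneg hw.le]
  calc _ ≤ (1 - x) ^ s * (M + ε / 2 * ((1 - x) ^ s)⁻¹) := by gcongr
    _ = (1 - x) ^ s * M + ε / 2 := by field_simp
    _ < ε := by linarith

lemma one_sub_tanh_sq (t : ℝ) : 1 - Real.tanh t ^ 2 = (Real.cosh t ^ 2)⁻¹ := by
  have h := Real.cosh_sq t
  have := Real.cosh_pos t
  rw [Real.tanh_eq_sinh_div_cosh]
  field_simp
  linarith

lemma hasDerivAt_tanh (t : ℝ) : HasDerivAt Real.tanh (1 - Real.tanh t ^ 2) t := by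
  have h := (Real.hasDerivAt_sinh t).div (Real.hasDerivAt_cosh t) (Real.cosh_pos t).ne'
  have hc := Real.cosh_pos t
  have e : Real.tanh = Real.sinh / Real.cosh := by
    funext x; rw [Pi.div_apply, Real.tanh_eq_sinh_div_cosh]
  rw [e]
  refine h.congr_deriv ?_
  rw [Pi.div_apply]
  field_simp

lemma tanh_pos' {t : ℝ} (ht : 0 < t) : 0 < Real.tanh t := by
  rw [Real.tanh_eq_sinh_div_cosh]
  exact div_pos (Real.sinh_pos_iff.2 ht) (Real.cosh_pos t)

lemma tanh_sq_mem_Ioo {t : ℝ} (ht : 0 < t) : Real.tanh t ^ 2 ∈ Ioo (0 : ℝ) 1 := by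
  have h := one_sub_tanh_sq t
  have : 0 < (Real.cosh t ^ 2)⁻¹ := by have := Real.cosh_pos t; positivity
  exact ⟨by have := tanh_pos' ht; positivity, by linarith⟩

lemma hasDerivAt_Del (m₁ m₂ : ℕ) {t : ℝ} (ht : 0 < t) :
    HasDerivAt (Del m₁ m₂)
      ((((m₁ : ℝ) + m₂) / Real.tanh t + m₂ * Real.tanh t) * Del m₁ m₂ t) t := by
  have hs := Real.sinh_pos_iff.2 ht
  have hc := Real.cosh_pos t
  have h := (((Real.hasDerivAt_sinh t).const_mul 2).pow (m₁ + m₂)).mul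
    (((Real.hasDerivAt_cosh t).const_mul 2).pow m₂)
  refine h.congr_deriv ?_
  have e (k : ℕ) {y : ℝ} (hy : y ≠ 0) : (k : ℝ) * y ^ (k - 1) = k * y ^ k / y := by
    rcases k with _ | k
    · simp
    · rw [Nat.add_sub_cancel, pow_succ]; field_simp
  simp only [Pi.pow_apply]
  rw [e _ (by positivity), e _ (by positivity), Del, Real.tanh_eq_sinh_div_cosh]
  push_cast
  field_simp

lemma hasDerivAt_cosh_cpow (β : ℂ) (t : ℝ) :
    HasDerivAt (fun t : ℝ => ((Real.cosh t : ℝ) : ℂ) ^ β)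
      (β * Real.tanh t * ((Real.cosh t : ℝ) : ℂ) ^ β) t := by
  have hc := Real.cosh_pos t
  have hc' : ((Real.cosh t : ℝ) : ℂ) ≠ 0 := by exact_mod_cast hc.ne'
  have h := ((hasDerivAt_id ((Real.cosh t : ℝ) : ℂ)).cpow_const (c := β)
    (Complex.ofReal_mem_slitPlane.2 hc)).scomp t (Real.hasDerivAt_cosh t).ofReal_comp
  refine h.congr_deriv ?_
  rw [id_eq, Complex.cpow_sub _ _ hc', Complex.cpow_one, Real.tanh_eq_sinh_div_cosh, smul_eq_mul]
  push_cast
  field_simp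

/-- `u` solves the radial eigenvalue equation `(Δ u')' = -(λ² + ρ²) Δ u` on `(0, ∞)`,
with derivative `u'`. -/
structure IsRadialEigen (m₁ m₂ : ℕ) (l : ℂ) (u u' : ℝ → ℂ) : Prop where
  deriv : ∀ t, 0 < t → HasDerivAt u (u' t) t
  deriv_flux : ∀ t, 0 < t → HasDerivAt (fun t => (Del m₁ m₂ t : ℂ) * u' t)
    (-(l ^ 2 + (rho m₁ m₂ : ℂ) ^ 2) * (Del m₁ m₂ t : ℂ) * u t) t

lemma IsRadialEigen.comb {m₁ m₂ : ℕ} {l : ℂ} {u u' v v' : ℝ → ℂ}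
    (hu : IsRadialEigen m₁ m₂ l u u') (hv : IsRadialEigen m₁ m₂ l v v') (a b : ℂ) :
    IsRadialEigen m₁ m₂ l (fun t => a * u t + b * v t) (fun t => a * u' t + b * v' t) where
  deriv t ht := ((hu.deriv t ht).const_mul a).add ((hv.deriv t ht).const_mul b)
  deriv_flux t ht := by
    have := ((hu.deriv_flux t ht).const_mul a).add ((hv.deriv_flux t ht).const_mul b)
    have e : (fun t => (Del m₁ m₂ t : ℂ) * (a * u' t + b * v' t)) =
        (fun t => a * ((Del m₁ m₂ t : ℂ) * u' t)) + fun t => b * ((Del m₁ m₂ t : ℂ) * v' t) := by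
      funext t; simp only [Pi.add_apply]; ring
    rw [e]
    exact this.congr_deriv (by ring)

/-- The function `cosh ^ (-α) * G (tanh²)`. -/
def radialFun (α : ℂ) (G : ℝ → ℂ) (t : ℝ) : ℂ :=
  ((Real.cosh t : ℝ) : ℂ) ^ (-α) * G (Real.tanh t ^ 2)

/-- The derivative of `radialFun α G` when `G₁` is the derivative of `G`. -/
def radialDer (α : ℂ) (G G₁ : ℝ → ℂ) (t : ℝ) : ℂ :=
  ((Real.cosh t : ℝ) : ℂ) ^ (-α) * (-α * Real.tanh t * G (Real.tanh t ^ 2) +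
    2 * Real.tanh t * (1 - (Real.tanh t : ℂ) ^ 2) * G₁ (Real.tanh t ^ 2))

lemma hasDerivAt_comp_tanh_sq {G : ℝ → ℂ} {g : ℂ} {t : ℝ}
    (h : HasDerivAt G g (Real.tanh t ^ 2)) :
    HasDerivAt (fun t => G (Real.tanh t ^ 2))
      (2 * Real.tanh t * (1 - (Real.tanh t : ℂ) ^ 2) * g) t := by
  have := h.scomp t ((hasDerivAt_tanh t).pow 2)
  refine this.congr_deriv ?_
  rw [Complex.real_smul]
  push_cast
  ring

lemma isRadialEigen_radialFun (m₁ m₂ : ℕ) (l : ℂ) {G G₁ G₂ : ℝ → ℂ}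
    (hG : ∀ x ∈ Ioo (0 : ℝ) 1, HasDerivAt G (G₁ x) x)
    (hG₁ : ∀ x ∈ Ioo (0 : ℝ) 1, HasDerivAt G₁ (G₂ x) x)
    (hode : ∀ x ∈ Ioo (0 : ℝ) 1, (x : ℂ) * (1 - x) * G₂ x +
      (((m₁ : ℂ) + m₂ + 1) / 2 - ((((m₁ : ℂ) + 2) / 4 + Complex.I * l / 2) +
        ((rho m₁ m₂ : ℂ) + Complex.I * l) / 2 + 1) * x) * G₁ x -
      (((m₁ : ℂ) + 2) / 4 + Complex.I * l / 2) * (((rho m₁ m₂ : ℂ) + Complex.I * l) / 2) *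
        G x = 0) :
    IsRadialEigen m₁ m₂ l (radialFun ((rho m₁ m₂ : ℂ) + Complex.I * l) G)
      (radialDer ((rho m₁ m₂ : ℂ) + Complex.I * l) G G₁) where
  deriv t ht := by
    have h := (hasDerivAt_cosh_cpow (-((rho m₁ m₂ : ℂ) + Complex.I * l)) t).mul
      (hasDerivAt_comp_tanh_sq (hG _ (tanh_sq_mem_Ioo ht)))
    refine h.congr_deriv ?_
    rw [radialDer]
    ring
  deriv_flux t ht := by
    have hx := tanh_sq_mem_Ioo ht
    have hτ := (hasDerivAt_tanh t).ofReal_comp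
    have h0 := hasDerivAt_cosh_cpow (-((rho m₁ m₂ : ℂ) + Complex.I * l)) t
    have h1 := hasDerivAt_comp_tanh_sq (hG _ hx)
    have h2 := hasDerivAt_comp_tanh_sq (hG₁ _ hx)
    have h := (hasDerivAt_Del m₁ m₂ ht).ofReal_comp.mul
      (h0.mul (((hτ.const_mul (-((rho m₁ m₂ : ℂ) + Complex.I * l))).mul h1).add
        (((hτ.const_mul 2).mul ((hτ.pow 2).const_sub 1)).mul h2)))
    refine h.congr_deriv ?_
    have ht0 : (Real.tanh t : ℂ) ≠ 0 := by exact_mod_cast (tanh_pos' ht).ne'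
    have ho := hode _ hx
    have hI := Complex.I_sq
    simp only [Pi.mul_apply, Pi.add_apply, Pi.pow_apply, radialFun]
    simp only [Complex.ofReal_mul, Complex.ofReal_add, Complex.ofReal_sub, Complex.ofReal_div,
      Complex.ofReal_pow, Complex.ofReal_one, Complex.ofReal_natCast, Nat.cast_ofNat] at ho ⊢
    have hr : (rho m₁ m₂ : ℂ) = ((m₁ : ℂ) + 2 * m₂) / 2 := by simp [rho]
    rw [hr] at ho ⊢
    clear h h0 h1 h2 hτ
    have hq : ((m₁ : ℂ) + m₂) / (Real.tanh t : ℂ) * (Real.tanh t : ℂ) = m₁ + m₂ :=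
      div_mul_cancel₀ _ ht0
    generalize ((m₁ : ℂ) + m₂) / (Real.tanh t : ℂ) = q at hq ⊢
    generalize ((Real.cosh t : ℝ) : ℂ) ^ (-(((m₁ : ℂ) + 2 * m₂) / 2 + Complex.I * l)) = e
    generalize (Del m₁ m₂ t : ℂ) = D
    generalize (Real.tanh t : ℂ) = τ at *
    generalize G (Real.tanh t ^ 2) = g at *
    generalize G₁ (Real.tanh t ^ 2) = g₁ at *
    generalize G₂ (Real.tanh t ^ 2) = g₂ at *
    linear_combination (4 * (1 - τ ^ 2) * D * e) * ho + (l ^ 2 * D * e * g) * hI +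
      D * e * (-(((m₁ : ℂ) + 2 * m₂) / 2 + Complex.I * l) * g + 2 * (1 - τ ^ 2) * g₁) * hq

lemma norm_cosh_cpow (β : ℂ) (t : ℝ) :
    ‖((Real.cosh t : ℝ) : ℂ) ^ β‖ = Real.cosh t ^ β.re :=
  Complex.norm_cpow_eq_rpow_re_of_pos (Real.cosh_pos t) β

lemma Del_eq_tanh (m₁ m₂ : ℕ) (t : ℝ) :
    Del m₁ m₂ t =
      2 ^ (m₁ + 2 * m₂) * Real.tanh t ^ (m₁ + m₂) * Real.cosh t ^ (m₁ + 2 * m₂) := by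
  have hc := (Real.cosh_pos t).ne'
  have : Real.sinh t = Real.tanh t * Real.cosh t := by
    rw [Real.tanh_eq_sinh_div_cosh]; field_simp
  rw [Del, this]
  ring

lemma Del_pos (m₁ m₂ : ℕ) {t : ℝ} (ht : 0 < t) : 0 < Del m₁ m₂ t := by
  have := Real.sinh_pos_iff.2 ht
  have := Real.cosh_pos t
  unfold Del
  positivity

lemma continuous_Del (m₁ m₂ : ℕ) : Continuous (Del m₁ m₂) := by
  unfold Del
  fun_prop

lemma continuous_tanh' : Continuous Real.tanh :=
  continuous_iff_continuousAt.2 fun t => (hasDerivAt_tanh t).continuousAt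

lemma tendsto_radialFun {α : ℂ} {G : ℝ → ℂ} (hG : ContinuousAt G 0) :
    Tendsto (radialFun α G) (𝓝 0) (𝓝 (G 0)) := by
  have h1 := (hasDerivAt_cosh_cpow (-α) 0).continuousAt
  have h2 : ContinuousAt (fun t => G (Real.tanh t ^ 2)) 0 := by
    refine ContinuousAt.comp (f := fun t => Real.tanh t ^ 2) ?_
      (continuous_tanh'.pow 2).continuousAt
    simpa using hG
  have : ContinuousAt (radialFun α G) 0 := h1.mul h2
  simpa [radialFun] using this.tendsto

lemma tendsto_radialDer {α : ℂ} {G G₁ : ℝ → ℂ} (hG : ContinuousAt G 0)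
    (hG₁ : ContinuousAt G₁ 0) : Tendsto (radialDer α G G₁) (𝓝 0) (𝓝 0) := by
  have h1 := (hasDerivAt_cosh_cpow (-α) 0).continuousAt
  have h2 {H : ℝ → ℂ} (hH : ContinuousAt H 0) :
      ContinuousAt (fun t => H (Real.tanh t ^ 2)) 0 := by
    refine ContinuousAt.comp (f := fun t => Real.tanh t ^ 2) ?_
      (continuous_tanh'.pow 2).continuousAt
    simpa using hH
  have h3 : ContinuousAt (fun t => (Real.tanh t : ℂ)) 0 :=
    (Complex.continuous_ofReal.comp continuous_tanh').continuousAt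
  have : ContinuousAt (radialDer α G G₁) 0 :=
    h1.mul (((continuousAt_const.mul h3).mul (h2 hG)).add
      (((continuousAt_const.mul h3).mul (continuousAt_const.sub (h3.pow 2))).mul (h2 hG₁)))
  simpa [radialDer] using this.tendsto

/-- The derivative of `sph`. -/
def sphDer (m₁ m₂ : ℕ) (l : ℂ) : ℝ → ℂ :=
  radialDer ((rho m₁ m₂ : ℂ) + Complex.I * l)
    (fun x => hyp (((m₁ : ℂ) + 2) / 4 + Complex.I * l / 2) (((rho m₁ m₂ : ℂ) + Complex.I * l) / 2)
      (((m₁ : ℂ) + (m₂ : ℂ) + 1) / 2) x)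
    (fun x => (((m₁ : ℂ) + 2) / 4 + Complex.I * l / 2) * (((rho m₁ m₂ : ℂ) + Complex.I * l) / 2) /
      (((m₁ : ℂ) + (m₂ : ℂ) + 1) / 2) *
      hyp (((m₁ : ℂ) + 2) / 4 + Complex.I * l / 2 + 1)
        (((rho m₁ m₂ : ℂ) + Complex.I * l) / 2 + 1) (((m₁ : ℂ) + (m₂ : ℂ) + 1) / 2 + 1) x)

lemma norm_ofReal_lt_one {x : ℝ} (hx : x ∈ Ioo (0 : ℝ) 1) : ‖(x : ℂ)‖ < 1 := by
  rw [Complex.norm_real, Real.norm_eq_abs, abs_of_pos hx.1]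
  exact hx.2

lemma sph_param_re_pos (m₁ m₂ : ℕ) : 0 < (((m₁ : ℂ) + (m₂ : ℂ) + 1) / 2).re := by
  have : (((m₁ : ℂ) + (m₂ : ℂ) + 1) / 2).re = ((m₁ : ℝ) + m₂ + 1) / 2 := by simp
  rw [this]
  positivity

lemma isRadialEigen_sph (m₁ m₂ : ℕ) (l : ℂ) :
    IsRadialEigen m₁ m₂ l (sph m₁ m₂ l) (sphDer m₁ m₂ l) := by
  have hc := sph_param_re_pos m₁ m₂
  have hc' : 0 < (((m₁ : ℂ) + (m₂ : ℂ) + 1) / 2 + 1).re := by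
    rw [Complex.add_re, Complex.one_re]; linarith
  refine isRadialEigen_radialFun m₁ m₂ l
    (fun x hx => (hasDerivAt_hyp _ _ hc (norm_ofReal_lt_one hx)).comp_ofReal)
    (fun x hx => ((hasDerivAt_hyp _ _ hc' (norm_ofReal_lt_one hx)).comp_ofReal).const_mul _)
    (fun x hx => hyp_ode _ _ hc (norm_ofReal_lt_one hx))

lemma tendsto_sph (m₁ m₂ : ℕ) (l : ℂ) : Tendsto (sph m₁ m₂ l) (𝓝[>] 0) (𝓝 1) := by
  have h := tendsto_radialFun (α := (rho m₁ m₂ : ℂ) + Complex.I * l) (hasDerivAt_hyp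
    (((m₁ : ℂ) + 2) / 4 + Complex.I * l / 2) (((rho m₁ m₂ : ℂ) + Complex.I * l) / 2)
    (sph_param_re_pos m₁ m₂) (x := ((0 : ℝ) : ℂ)) (by simp)).comp_ofReal.continuousAt
  have e (a b c : ℂ) : hyp a b c 0 = 1 := by
    rw [hyp, tsum_eq_single 0 (fun n hn => by simp [hn])]
    simp
  rw [Complex.ofReal_zero, e] at h
  exact h.mono_left nhdsWithin_le_nhds

lemma tendsto_sphDer (m₁ m₂ : ℕ) (l : ℂ) : Tendsto (sphDer m₁ m₂ l) (𝓝[>] 0) (𝓝 0) := by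
  have hc := sph_param_re_pos m₁ m₂
  have hc' : 0 < (((m₁ : ℂ) + (m₂ : ℂ) + 1) / 2 + 1).re := by
    rw [Complex.add_re, Complex.one_re]; linarith
  refine (tendsto_radialDer (hasDerivAt_hyp _ _ hc (x := ((0 : ℝ) : ℂ))
      (by simp)).comp_ofReal.continuousAt ?_).mono_left nhdsWithin_le_nhds
  exact continuousAt_const.mul
    (hasDerivAt_hyp _ _ hc' (x := ((0 : ℝ) : ℂ)) (by simp)).comp_ofReal.continuousAt

/-- The constant by which `bfun` differs from the associated `radialFun`. -/
def bconst (m₁ m₂ : ℕ) (l : ℂ) : ℂ :=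
  (2 : ℂ) ^ (-(rho m₁ m₂ : ℂ) - 1 - Complex.I * l) *
    (Complex.Gamma (((rho m₁ m₂ : ℂ) - Complex.I * l) / 2) *
      Complex.Gamma (((m₁ : ℂ) + 2) / 4 - Complex.I * l / 2) /
      (Complex.Gamma (((m₁ : ℂ) + (m₂ : ℂ) + 1) / 2) * Complex.Gamma (1 - Complex.I * l))) *
    (2 : ℂ) ^ (Complex.I * l - (rho m₁ m₂ : ℂ))

/-- The derivative of `bfun`, divided by `bconst`. -/
def bDer (m₁ m₂ : ℕ) (l : ℂ) : ℝ → ℂ :=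
  radialDer ((rho m₁ m₂ : ℂ) + Complex.I * (-l))
    (fun x => hyp (((rho m₁ m₂ : ℂ) - Complex.I * l) / 2) (((m₁ : ℂ) + 2) / 4 - Complex.I * l / 2)
      (1 - Complex.I * l) ((1 - x : ℝ) : ℂ))
    (fun x => -(((rho m₁ m₂ : ℂ) - Complex.I * l) / 2 *
      (((m₁ : ℂ) + 2) / 4 - Complex.I * l / 2) / (1 - Complex.I * l) *
        hyp (((rho m₁ m₂ : ℂ) - Complex.I * l) / 2 + 1)
          (((m₁ : ℂ) + 2) / 4 - Complex.I * l / 2 + 1) (1 - Complex.I * l + 1) ((1 - x : ℝ) : ℂ)))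

lemma bfun_eq_radialFun (m₁ m₂ : ℕ) (l : ℂ) (t : ℝ) :
    bfun m₁ m₂ l t = bconst m₁ m₂ l * radialFun ((rho m₁ m₂ : ℂ) + Complex.I * (-l))
      (fun x => hyp (((rho m₁ m₂ : ℂ) - Complex.I * l) / 2)
        (((m₁ : ℂ) + 2) / 4 - Complex.I * l / 2) (1 - Complex.I * l) ((1 - x : ℝ) : ℂ)) t := by
  rw [bfun, Phi, bconst, radialFun, one_sub_tanh_sq, Complex.ofReal_mul,
    Complex.mul_cpow_ofReal_nonneg (by norm_num) (Real.cosh_pos t).le, Complex.ofReal_inv]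
  have : -((rho m₁ m₂ : ℂ) + Complex.I * (-l)) = Complex.I * l - (rho m₁ m₂ : ℂ) := by ring
  rw [this, Complex.ofReal_ofNat]
  ring

lemma bfun_param_re_pos {l : ℂ} (hl : 0 < l.im) : 0 < (1 - Complex.I * l).re := by
  simp
  linarith

lemma HasDerivAt.comp_one_sub {F : ℂ → ℂ} {F' : ℂ} {x : ℝ}
    (h : HasDerivAt F F' ((1 - x : ℝ) : ℂ)) :
    HasDerivAt (fun x : ℝ => F ((1 - x : ℝ) : ℂ)) (-F') x := by
  have := h.comp_ofReal.scomp x ((hasDerivAt_id x).const_sub 1)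
  exact this.congr_deriv (by simp)

lemma isRadialEigen_bfun (m₁ m₂ : ℕ) {l : ℂ} (hl : 0 < l.im) :
    IsRadialEigen m₁ m₂ l (bfun m₁ m₂ l) (fun t => bconst m₁ m₂ l * bDer m₁ m₂ l t) := by
  have hc := bfun_param_re_pos hl
  have hc' : 0 < (1 - Complex.I * l + 1).re := by
    rw [Complex.add_re, Complex.one_re]; linarith
  have hn {x : ℝ} (hx : x ∈ Ioo (0 : ℝ) 1) : ‖((1 - x : ℝ) : ℂ)‖ < 1 :=
    norm_ofReal_lt_one ⟨by linarith [hx.2], by linarith [hx.1]⟩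
  have h := isRadialEigen_radialFun m₁ m₂ (-l)
    (fun x hx => HasDerivAt.comp_one_sub (hasDerivAt_hyp (((rho m₁ m₂ : ℂ) - Complex.I * l) / 2)
      (((m₁ : ℂ) + 2) / 4 - Complex.I * l / 2) hc (hn hx)))
    (fun x hx => ((HasDerivAt.comp_one_sub (hasDerivAt_hyp
      (((rho m₁ m₂ : ℂ) - Complex.I * l) / 2 + 1)
      (((m₁ : ℂ) + 2) / 4 - Complex.I * l / 2 + 1) hc' (hn hx))).const_mul _).neg)
    (fun x hx => by
      have := hyp_ode (((rho m₁ m₂ : ℂ) - Complex.I * l) / 2)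
        (((m₁ : ℂ) + 2) / 4 - Complex.I * l / 2) hc (hn hx)
      have hr : (rho m₁ m₂ : ℂ) = ((m₁ : ℂ) + 2 * m₂) / 2 := by simp [rho]
      push_cast at this ⊢
      rw [hr] at this ⊢
      linear_combination this)
  have h2 := h.comb h (bconst m₁ m₂ l) 0
  have e1 : bfun m₁ m₂ l = _ := funext (bfun_eq_radialFun m₁ m₂ l)
  rw [e1]
  refine ⟨fun t ht => ?_, fun t ht => ?_⟩
  · simpa [bDer] using h2.deriv t ht
  · simpa [bDer] using h2.deriv_flux t ht

lemma exp_div_two_le_cosh (t : ℝ) : Real.exp t / 2 ≤ Real.cosh t := by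
  rw [Real.cosh_eq]
  have := Real.exp_pos (-t)
  linarith

lemma cosh_le_exp {t : ℝ} (ht : 0 < t) : Real.cosh t ≤ Real.exp t := by
  rw [Real.cosh_eq]
  have : Real.exp (-t) ≤ Real.exp t := Real.exp_le_exp.2 (by linarith)
  linarith

lemma norm_sph_le (m₁ m₂ : ℕ) {l : ℂ} (hl₀ : 0 < l.im) (hl₁ : l.im < rho m₁ m₂) :
    ∃ C : ℝ, 0 ≤ C ∧ ∀ t : ℝ, 0 < t →
      ‖sph m₁ m₂ l t‖ ≤ C * Real.exp (-((rho m₁ m₂ - l.im) * t)) := by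
  have hc := sph_param_re_pos m₁ m₂
  obtain ⟨C, hC, h⟩ := norm_hyp_le (a := ((m₁ : ℂ) + 2) / 4 + Complex.I * l / 2)
    (b := ((rho m₁ m₂ : ℂ) + Complex.I * l) / 2) hc (by
      simp [rho]
      linarith)
  refine ⟨2 ^ (rho m₁ m₂ - l.im) * C, by positivity, fun t ht => ?_⟩
  have hx := tanh_sq_mem_Ioo ht
  rw [sph, norm_mul, norm_cosh_cpow]
  have h1 : Real.cosh t ^ (-((rho m₁ m₂ : ℂ) + Complex.I * l)).re ≤
      2 ^ (rho m₁ m₂ - l.im) * Real.exp (-((rho m₁ m₂ - l.im) * t)) := by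
    have e : (-((rho m₁ m₂ : ℂ) + Complex.I * l)).re = -(rho m₁ m₂ - l.im) := by
      simp
      ring
    rw [e]
    refine (Real.rpow_le_rpow_of_nonpos (by positivity) (exp_div_two_le_cosh t)
      (by linarith)).trans_eq ?_
    rw [Real.div_rpow (Real.exp_pos t).le (by norm_num), ← Real.exp_mul,
      Real.rpow_neg (by norm_num), div_inv_eq_mul, mul_comm]
    congr 2
    ring
  calc _ ≤ (2 ^ (rho m₁ m₂ - l.im) * Real.exp (-((rho m₁ m₂ - l.im) * t))) * C :=
        mul_le_mul h1 (h _ hx.1.le hx.2) (norm_nonneg _) (by positivity)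
    _ = _ := by ring

lemma norm_sph_ofReal_le (m₁ m₂ : ℕ) (hm₁ : 1 ≤ m₁) (ξ : ℝ) :
    ∃ C : ℝ, 0 ≤ C ∧ ∀ t : ℝ, 0 < t → ‖sph m₁ m₂ ξ t‖ ≤ C := by
  have hc := sph_param_re_pos m₁ m₂
  have hm : (1 : ℝ) ≤ m₁ := by exact_mod_cast hm₁
  have hρ : 0 < rho m₁ m₂ := by unfold rho; positivity
  obtain ⟨C, hC, h⟩ := norm_hyp_le_mul (((m₁ : ℂ) + 2) / 4 + Complex.I * ξ / 2)
    (((rho m₁ m₂ : ℂ) + Complex.I * ξ) / 2) (s := rho m₁ m₂ / 2) hc (by positivity) (by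
      have : (0 : ℝ) ≤ m₂ := Nat.cast_nonneg _
      simp [rho]
      linarith)
  refine ⟨C, hC, fun t ht => ?_⟩
  have hx := tanh_sq_mem_Ioo ht
  have hch := Real.cosh_pos t
  rw [sph, norm_mul, norm_cosh_cpow]
  have e : (-((rho m₁ m₂ : ℂ) + Complex.I * ξ)).re = -rho m₁ m₂ := by simp
  have e2 : ((1 - Real.tanh t ^ 2) ^ (rho m₁ m₂ / 2))⁻¹ = Real.cosh t ^ rho m₁ m₂ := by
    rw [one_sub_tanh_sq, Real.inv_rpow (by positivity), inv_inv, ← Real.rpow_natCast,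
      ← Real.rpow_mul hch.le]
    congr 1
    push_cast
    ring
  have h1 := h _ hx.1.le hx.2
  rw [e2] at h1
  rw [e]
  calc _ ≤ Real.cosh t ^ (-rho m₁ m₂) * (C * Real.cosh t ^ rho m₁ m₂) := by gcongr
    _ = C := by
      rw [Real.rpow_neg hch.le]
      have := Real.rpow_pos_of_pos hch (rho m₁ m₂)
      field_simp

lemma norm_bfun_le (m₁ m₂ : ℕ) (hm₁ : 1 ≤ m₁) {l : ℂ} (hl₀ : 0 < l.im)
    (hl₁ : l.im < rho m₁ m₂) :
    ∃ C : ℝ, 0 ≤ C ∧ ∀ t : ℝ, 0 < t →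
      ‖bfun m₁ m₂ l t‖ * Del m₁ m₂ t ≤ C * Real.exp ((rho m₁ m₂ - l.im) * t) := by
  have hc := bfun_param_re_pos hl₀
  have hm : (1 : ℝ) ≤ m₁ := by exact_mod_cast hm₁
  obtain ⟨C, hC, h⟩ := norm_hyp_le_mul (((rho m₁ m₂ : ℂ) - Complex.I * l) / 2)
    (((m₁ : ℂ) + 2) / 4 - Complex.I * l / 2) (s := ((m₁ + m₂ : ℕ) : ℝ) / 2) hc
    (by push_cast; positivity) (by
      simp [rho]
      linarith)
  refine ⟨‖bconst m₁ m₂ l‖ * C * 2 ^ (m₁ + 2 * m₂), by positivity, fun t ht => ?_⟩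
  have hx := tanh_sq_mem_Ioo ht
  have hτ := tanh_pos' ht
  have hch := Real.cosh_pos t
  rw [bfun_eq_radialFun, radialFun, norm_mul, norm_mul, norm_cosh_cpow, Del_eq_tanh]
  have e : (-((rho m₁ m₂ : ℂ) + Complex.I * (-l))).re = -rho m₁ m₂ - l.im := by
    simp
    ring
  have h1 := h (1 - Real.tanh t ^ 2) (by linarith [hx.2]) (by linarith [hx.1])
  have e2 : ((1 - (1 - Real.tanh t ^ 2)) ^ (((m₁ + m₂ : ℕ) : ℝ) / 2))⁻¹ =
      (Real.tanh t ^ (m₁ + m₂))⁻¹ := by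
    rw [sub_sub_cancel, ← Real.rpow_natCast, ← Real.rpow_mul hτ.le, ← Real.rpow_natCast]
    congr 2
    push_cast
    ring
  rw [e2] at h1
  have h2 : Real.cosh t ^ (-rho m₁ m₂ - l.im) * Real.cosh t ^ (m₁ + 2 * m₂) ≤
      Real.exp ((rho m₁ m₂ - l.im) * t) := by
    rw [← Real.rpow_natCast, ← Real.rpow_add hch, mul_comm (rho m₁ m₂ - l.im), Real.exp_mul]
    have : -rho m₁ m₂ - l.im + ((m₁ + 2 * m₂ : ℕ) : ℝ) = rho m₁ m₂ - l.im := by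
      rw [rho]
      push_cast
      ring
    rw [this]
    exact Real.rpow_le_rpow hch.le (cosh_le_exp ht) (by linarith)
  rw [e]
  calc _ ≤ ‖bconst m₁ m₂ l‖ * (Real.cosh t ^ (-rho m₁ m₂ - l.im) *
        (C * (Real.tanh t ^ (m₁ + m₂))⁻¹)) *
        (2 ^ (m₁ + 2 * m₂) * Real.tanh t ^ (m₁ + m₂) * Real.cosh t ^ (m₁ + 2 * m₂)) := by
        gcongr
    _ = ‖bconst m₁ m₂ l‖ * C * 2 ^ (m₁ + 2 * m₂) *
        (Real.cosh t ^ (-rho m₁ m₂ - l.im) * Real.cosh t ^ (m₁ + 2 * m₂)) := by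
        field_simp
    _ ≤ _ := by gcongr

lemma Del_le_of_le (m₁ m₂ : ℕ) {s t : ℝ} (ht : 0 < t) (hts : t ≤ s) :
    Del m₁ m₂ t ≤ 2 ^ m₂ * Real.exp (-(2 * rho m₁ m₂ * (s - t))) * Del m₁ m₂ s := by
  have hs := Real.sinh_pos_iff.2 ht
  have hc := Real.cosh_pos t
  have h1 : Real.sinh t ≤ Real.exp (-(s - t)) * Real.sinh s := by
    rw [Real.sinh_eq, Real.sinh_eq, mul_div_assoc', mul_sub, ← Real.exp_add, ← Real.exp_add]
    have e1 : -(s - t) + s = t := by ring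
    have : Real.exp (-(s - t) + -s) ≤ Real.exp (-t) := Real.exp_le_exp.2 (by linarith)
    rw [e1]
    linarith
  have h2 : Real.cosh t ≤ 2 * Real.exp (-(s - t)) * Real.cosh s := by
    refine (cosh_le_exp ht).trans ?_
    have e1 : Real.exp t = Real.exp (-(s - t)) * Real.exp s := by
      rw [← Real.exp_add]; congr 1; ring
    rw [e1]
    have := exp_div_two_le_cosh s
    have := Real.exp_pos (-(s - t))
    nlinarith
  have e : Real.exp (-(2 * rho m₁ m₂ * (s - t))) =
      Real.exp (-(s - t)) ^ (m₁ + m₂) * Real.exp (-(s - t)) ^ m₂ := by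
    rw [← pow_add, ← Real.exp_nat_mul]
    congr 1
    rw [rho]
    push_cast
    ring
  rw [e]
  calc Del m₁ m₂ t ≤ (2 * (Real.exp (-(s - t)) * Real.sinh s)) ^ (m₁ + m₂) *
        (2 * (2 * Real.exp (-(s - t)) * Real.cosh s)) ^ m₂ := by
        have := Real.sinh_pos_iff.2 (ht.trans_le hts)
        unfold Del
        gcongr
    _ = _ := by
        unfold Del
        simp only [mul_pow]
        ring

lemma tendsto_tanh_nhdsGT : Tendsto Real.tanh (𝓝[>] 0) (𝓝 0) := by
  have := continuous_tanh'.tendsto 0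
  rw [Real.tanh_zero] at this
  exact this.mono_left nhdsWithin_le_nhds

lemma tendsto_Del_mul_bDer (m₁ m₂ : ℕ) (hm₁ : 1 ≤ m₁) {l : ℂ} (hl₀ : 0 < l.im)
    (hl₁ : l.im < rho m₁ m₂) :
    Tendsto (fun t => (Del m₁ m₂ t : ℂ) * (bconst m₁ m₂ l * bDer m₁ m₂ l t)) (𝓝[>] 0)
      (𝓝 (-1)) := by
  set α := (rho m₁ m₂ : ℂ) + Complex.I * (-l) with hα
  set a := ((rho m₁ m₂ : ℂ) - Complex.I * l) / 2 with ha
  set b := ((m₁ : ℂ) + 2) / 4 - Complex.I * l / 2 with hb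
  set c := 1 - Complex.I * l with hc
  have hm : (1 : ℝ) ≤ m₁ := by exact_mod_cast hm₁
  have hc0 : 0 < c.re := bfun_param_re_pos hl₀
  have ha0 : 0 < a.re := by
    simp [ha]
    linarith
  have hb0 : 0 < b.re := by
    simp [hb]
    linarith
  have hc1 : 0 < (c + 1).re := by rw [Complex.add_re, Complex.one_re]; linarith
  have ne {z : ℂ} (hz : 0 < z.re) : z ≠ 0 := by rintro rfl; simp at hz
  have hs0 : (0 : ℝ) < (((m₁ + m₂ + 1 : ℕ) : ℝ) / 2) := by positivity
  have hr : (rho m₁ m₂ : ℂ) = ((m₁ : ℂ) + 2 * m₂) / 2 := by simp [rho]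
  have hF := tendsto_hyp_one (a := a + 1) (b := b + 1) hc1 hs0 (by
    rw [ha, hb, hc, hr]
    push_cast
    ring)
  have hy : Tendsto (fun t : ℝ => 1 - Real.tanh t ^ 2) (𝓝[>] 0) (𝓝[<] 1) := by
    refine tendsto_nhdsWithin_iff.2 ⟨?_, ?_⟩
    · simpa using (tendsto_tanh_nhdsGT.pow 2).const_sub 1
    · filter_upwards [self_mem_nhdsWithin] with t ht
      have := tanh_sq_mem_Ioo ht
      exact mem_Iio.2 (by linarith [this.1])
  have hF2 := hF.comp hy
  have hτ : Tendsto (fun t => (Real.tanh t : ℂ)) (𝓝[>] 0) (𝓝 0) := by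
    have := (Complex.continuous_ofReal.tendsto 0).comp tendsto_tanh_nhdsGT
    rwa [Complex.ofReal_zero] at this
  have hch : Tendsto (fun t => (Real.cosh t : ℂ)) (𝓝[>] 0) (𝓝 1) := by
    have : Tendsto (fun t => (Real.cosh t : ℂ)) (𝓝 0) (𝓝 _) :=
      (Complex.continuous_ofReal.comp Real.continuous_cosh).tendsto 0
    simpa using this.mono_left nhdsWithin_le_nhds
  have hchα : Tendsto (fun t => (Real.cosh t : ℂ) ^ (-α)) (𝓝[>] 0) (𝓝 1) := by
    have := (hasDerivAt_cosh_cpow (-α) 0).continuousAt.tendsto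
    simpa using this.mono_left nhdsWithin_le_nhds
  obtain ⟨C, hC, hbd⟩ := norm_bfun_le m₁ m₂ hm₁ hl₀ hl₁
  have h1 : Tendsto (fun t => (-α * (Real.tanh t : ℂ)) * ((Del m₁ m₂ t : ℂ) * bfun m₁ m₂ l t))
      (𝓝[>] 0) (𝓝 0) := by
    have hz : Tendsto (fun t => -α * (Real.tanh t : ℂ)) (𝓝[>] 0) (𝓝 0) := by
      simpa using hτ.const_mul (-α)
    refine hz.zero_mul_isBoundedUnder_le ?_
    refine isBoundedUnder_of_eventually_le (a := C * Real.exp ((rho m₁ m₂ - l.im) * 1)) ?_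
    filter_upwards [Ioo_mem_nhdsGT (zero_lt_one)] with t ht
    have hD := Del_pos m₁ m₂ ht.1
    simp only [Function.comp, norm_mul, Complex.norm_real, Real.norm_of_nonneg hD.le]
    rw [mul_comm]
    refine (hbd t ht.1).trans ?_
    have h3 : 0 ≤ rho m₁ m₂ - l.im := by linarith
    have h4 := ht.2.le
    gcongr
  have h2 := (((((hchα.const_mul (bconst m₁ m₂ l)).mul ((hτ.pow 2).const_sub 1)).mul
    (hch.pow (m₁ + 2 * m₂))).const_mul (2 * 2 ^ (m₁ + 2 * m₂) * -(a * b / c))).mul hF2)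
  refine ((h1.add h2).congr' ?_).trans_eq ?_
  · filter_upwards [self_mem_nhdsWithin] with t ht
    have hτ := tanh_pos' ht
    have e2 : (1 - (1 - Real.tanh t ^ 2)) ^ (((m₁ + m₂ + 1 : ℕ) : ℝ) / 2) =
        Real.tanh t ^ (m₁ + m₂ + 1) := by
      rw [sub_sub_cancel, ← Real.rpow_natCast, ← Real.rpow_mul hτ.le, ← Real.rpow_natCast]
      congr 1
      push_cast
      ring
    simp only [Function.comp, e2]
    rw [bfun_eq_radialFun, bDer, radialFun, radialDer, Del_eq_tanh]
    push_cast
    ring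
  · have e2 : (2 : ℂ) ^ (-(rho m₁ m₂ : ℂ) - 1 - Complex.I * l) *
        (2 : ℂ) ^ (Complex.I * l - (rho m₁ m₂ : ℂ)) * (2 * 2 ^ (m₁ + 2 * m₂)) = 1 := by
      rw [← pow_succ', ← Complex.cpow_natCast, ← Complex.cpow_add _ _ (by norm_num),
        ← Complex.cpow_add _ _ (by norm_num), hr]
      refine Eq.trans ?_ (Complex.cpow_zero 2)
      congr 1
      push_cast
      ring
    have hs : ((((m₁ + m₂ + 1 : ℕ) : ℝ) / 2 : ℝ) : ℂ) = ((m₁ : ℂ) + m₂ + 1) / 2 := by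
      push_cast; rfl
    have g1 := Complex.Gamma_ne_zero_of_re_pos ha0
    have g2 := Complex.Gamma_ne_zero_of_re_pos hb0
    have g3 := Complex.Gamma_ne_zero_of_re_pos hc0
    have g4 := Complex.Gamma_ne_zero_of_re_pos (sph_param_re_pos m₁ m₂)
    have n1 := ne ha0
    have n2 := ne hb0
    have n3 := ne hc0
    rw [bconst, hs, Complex.Gamma_add_one _ n1, Complex.Gamma_add_one _ n2,
      Complex.Gamma_add_one _ n3, ← ha, ← hb, ← hc]
    congr 1
    simp only [one_pow, mul_one, ne_eq, OfNat.ofNat_ne_zero, not_false_eq_true, zero_pow,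
      sub_zero, zero_add]
    generalize (2 : ℂ) ^ (-(rho m₁ m₂ : ℂ) - 1 - Complex.I * l) = p at *
    generalize (2 : ℂ) ^ (Complex.I * l - (rho m₁ m₂ : ℂ)) = q at *
    have : -1 = -(p * q * (2 * 2 ^ (m₁ + 2 * m₂))) := by rw [e2]
    rw [this]
    field_simp

lemma IsRadialEigen.hasDerivAt_wronskian {m₁ m₂ : ℕ} {l k : ℂ} {u u' v v' : ℝ → ℂ}
    (hu : IsRadialEigen m₁ m₂ l u u') (hv : IsRadialEigen m₁ m₂ k v v') {t : ℝ} (ht : 0 < t) :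
    HasDerivAt (fun t => u t * ((Del m₁ m₂ t : ℂ) * v' t) - (Del m₁ m₂ t : ℂ) * u' t * v t)
      ((l ^ 2 - k ^ 2) * (u t * v t * (Del m₁ m₂ t : ℂ))) t := by
  have := ((hu.deriv t ht).mul (hv.deriv_flux t ht)).sub ((hu.deriv_flux t ht).mul (hv.deriv t ht))
  exact this.congr_deriv (by ring)

lemma tendsto_Del (m₁ m₂ : ℕ) (hm₁ : 1 ≤ m₁) :
    Tendsto (fun t => (Del m₁ m₂ t : ℂ)) (𝓝[>] 0) (𝓝 0) := by
  have h : Tendsto (fun t => (Del m₁ m₂ t : ℂ)) (𝓝 0) (𝓝 _) :=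
    (Complex.continuous_ofReal.comp (continuous_Del m₁ m₂)).tendsto 0
  have e : Del m₁ m₂ 0 = 0 := by
    simp [Del, show m₁ ≠ 0 by omega]
  simpa [e] using h.mono_left nhdsWithin_le_nhds

lemma tendsto_sph_wronskian (m₁ m₂ : ℕ) (hm₁ : 1 ≤ m₁) (l k : ℂ) :
    Tendsto (fun t => sph m₁ m₂ l t * ((Del m₁ m₂ t : ℂ) * sphDer m₁ m₂ k t) -
      (Del m₁ m₂ t : ℂ) * sphDer m₁ m₂ l t * sph m₁ m₂ k t) (𝓝[>] 0) (𝓝 0) := by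
  have hD := tendsto_Del m₁ m₂ hm₁
  have := ((tendsto_sph m₁ m₂ l).mul (hD.mul (tendsto_sphDer m₁ m₂ k))).sub
    ((hD.mul (tendsto_sphDer m₁ m₂ l)).mul (tendsto_sph m₁ m₂ k))
  simpa using this

lemma tendsto_bfun_wronskian (m₁ m₂ : ℕ) (hm₁ : 1 ≤ m₁) {l : ℂ} (hl₀ : 0 < l.im)
    (hl₁ : l.im < rho m₁ m₂) (k : ℂ) :
    Tendsto (fun t => bfun m₁ m₂ l t * ((Del m₁ m₂ t : ℂ) * sphDer m₁ m₂ k t) -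
      (Del m₁ m₂ t : ℂ) * (bconst m₁ m₂ l * bDer m₁ m₂ l t) * sph m₁ m₂ k t)
      (𝓝[>] 0) (𝓝 1) := by
  obtain ⟨C, hC, hbd⟩ := norm_bfun_le m₁ m₂ hm₁ hl₀ hl₁
  have h1 : Tendsto (fun t => sphDer m₁ m₂ k t * (bfun m₁ m₂ l t * (Del m₁ m₂ t : ℂ)))
      (𝓝[>] 0) (𝓝 0) := by
    refine (tendsto_sphDer m₁ m₂ k).zero_mul_isBoundedUnder_le ?_
    refine isBoundedUnder_of_eventually_le (a := C * Real.exp ((rho m₁ m₂ - l.im) * 1)) ?_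
    filter_upwards [Ioo_mem_nhdsGT (zero_lt_one)] with t ht
    have hD := Del_pos m₁ m₂ ht.1
    simp only [Function.comp, norm_mul, Complex.norm_real, Real.norm_of_nonneg hD.le]
    refine (hbd t ht.1).trans ?_
    have h3 : 0 ≤ rho m₁ m₂ - l.im := by linarith
    have h4 := ht.2.le
    gcongr
  have h2 := h1.sub ((tendsto_Del_mul_bDer m₁ m₂ hm₁ hl₀ hl₁).mul (tendsto_sph m₁ m₂ k))
  refine (h2.congr fun t => ?_).trans_eq (by simp)
  ring

lemma bfun_wronskian_eq_one (m₁ m₂ : ℕ) (hm₁ : 1 ≤ m₁) {l : ℂ} (hl₀ : 0 < l.im)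
    (hl₁ : l.im < rho m₁ m₂) {s : ℝ} (hs : 0 < s) :
    bfun m₁ m₂ l s * ((Del m₁ m₂ s : ℂ) * sphDer m₁ m₂ l s) -
      (Del m₁ m₂ s : ℂ) * (bconst m₁ m₂ l * bDer m₁ m₂ l s) * sph m₁ m₂ l s = 1 := by
  set W := fun t => bfun m₁ m₂ l t * ((Del m₁ m₂ t : ℂ) * sphDer m₁ m₂ l t) -
      (Del m₁ m₂ t : ℂ) * (bconst m₁ m₂ l * bDer m₁ m₂ l t) * sph m₁ m₂ l t
  have hW (t : ℝ) (ht : 0 < t) : HasDerivAt W 0 t :=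
    ((isRadialEigen_bfun m₁ m₂ hl₀).hasDerivAt_wronskian (isRadialEigen_sph m₁ m₂ l)
      ht).congr_deriv (by ring)
  have hconst (t : ℝ) (ht : 0 < t) : W t = W s :=
    isOpen_Ioi.is_const_of_deriv_eq_zero (convex_Ioi (0 : ℝ)).isPreconnected
      (fun x hx => (hW x hx).differentiableAt.differentiableWithinAt)
      (fun x hx => (hW x hx).deriv) ht hs
  refine tendsto_nhds_unique (tendsto_const_nhds.congr' ?_)
    (tendsto_bfun_wronskian m₁ m₂ hm₁ hl₀ hl₁ l)
  filter_upwards [self_mem_nhdsWithin] with t ht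
  exact (hconst t ht).symm

lemma continuousOn_sph (m₁ m₂ : ℕ) (l : ℂ) : ContinuousOn (sph m₁ m₂ l) (Ioi 0) :=
  fun t ht => ((isRadialEigen_sph m₁ m₂ l).deriv t ht).continuousAt.continuousWithinAt

lemma continuousOn_bfun (m₁ m₂ : ℕ) {l : ℂ} (hl₀ : 0 < l.im) :
    ContinuousOn (bfun m₁ m₂ l) (Ioi 0) :=
  fun t ht => ((isRadialEigen_bfun m₁ m₂ hl₀).deriv t ht).continuousAt.continuousWithinAt

/-- The kernel of `f ↦ Tfun f · sph ξ · Del`, without the factor `f · Del`. -/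
def resolventKernel (m₁ m₂ : ℕ) (l : ℂ) (ξ : ℝ) (s t : ℝ) : ℂ :=
  (sph m₁ m₂ l s * bfun m₁ m₂ l t - bfun m₁ m₂ l s * sph m₁ m₂ l t) *
    sph m₁ m₂ ξ t * (Del m₁ m₂ t : ℂ)

lemma continuousOn_resolventKernel (m₁ m₂ : ℕ) {l : ℂ} (hl₀ : 0 < l.im) (ξ s : ℝ) :
    ContinuousOn (resolventKernel m₁ m₂ l ξ s) (Ioi 0) :=
  (((continuousOn_const.mul (continuousOn_bfun m₁ m₂ hl₀)).sub
    (continuousOn_const.mul (continuousOn_sph m₁ m₂ l))).mul (continuousOn_sph m₁ m₂ ξ)).mul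
    (Complex.continuous_ofReal.comp (continuous_Del m₁ m₂)).continuousOn

lemma norm_resolventKernel_le (m₁ m₂ : ℕ) (hm₁ : 1 ≤ m₁) {l : ℂ} (hl₀ : 0 < l.im)
    (hl₁ : l.im < rho m₁ m₂) (ξ : ℝ) :
    ∃ M : ℝ, 0 ≤ M ∧ ∀ s t : ℝ, 0 < t → t < s →
      ‖resolventKernel m₁ m₂ l ξ s t‖ ≤ M * Real.exp (-((rho m₁ m₂ - l.im) * (s - t))) := by
  obtain ⟨A, hA, hA'⟩ := norm_sph_le m₁ m₂ hl₀ hl₁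
  obtain ⟨B, hB, hB'⟩ := norm_bfun_le m₁ m₂ hm₁ hl₀ hl₁
  obtain ⟨X, hX, hX'⟩ := norm_sph_ofReal_le m₁ m₂ hm₁ ξ
  refine ⟨A * B * X + B * 2 ^ m₂ * A * X, by positivity, fun s t ht hts => ?_⟩
  set δ := rho m₁ m₂ - l.im with hδ
  have hs := ht.trans hts
  have hD := Del_pos m₁ m₂ ht
  have e : resolventKernel m₁ m₂ l ξ s t =
      sph m₁ m₂ l s * (bfun m₁ m₂ l t * (Del m₁ m₂ t : ℂ)) * sph m₁ m₂ ξ t -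
        bfun m₁ m₂ l s * (Del m₁ m₂ t : ℂ) * sph m₁ m₂ l t * sph m₁ m₂ ξ t := by
    rw [resolventKernel]; ring
  have h1 : ‖sph m₁ m₂ l s * (bfun m₁ m₂ l t * (Del m₁ m₂ t : ℂ)) * sph m₁ m₂ ξ t‖ ≤
      A * B * X * Real.exp (-(δ * (s - t))) := by
    rw [norm_mul, norm_mul, norm_mul, Complex.norm_real, Real.norm_of_nonneg hD.le]
    calc _ ≤ A * Real.exp (-(δ * s)) * (B * Real.exp (δ * t)) * X :=
          mul_le_mul (mul_le_mul (hA' s hs) (hB' t ht) (by positivity) (by positivity))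
            (hX' t ht) (norm_nonneg _) (by positivity)
      _ = A * B * X * (Real.exp (-(δ * s)) * Real.exp (δ * t)) := by ring
      _ = _ := by rw [← Real.exp_add]; congr 2; ring
  have h2 : ‖bfun m₁ m₂ l s * (Del m₁ m₂ t : ℂ) * sph m₁ m₂ l t * sph m₁ m₂ ξ t‖ ≤
      B * 2 ^ m₂ * A * X * Real.exp (-(δ * (s - t))) := by
    rw [norm_mul, norm_mul, norm_mul, Complex.norm_real, Real.norm_of_nonneg hD.le]
    have h3 : ‖bfun m₁ m₂ l s‖ * Del m₁ m₂ t ≤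
        2 ^ m₂ * Real.exp (-(2 * rho m₁ m₂ * (s - t))) * (B * Real.exp (δ * s)) := by
      calc _ ≤ ‖bfun m₁ m₂ l s‖ *
            (2 ^ m₂ * Real.exp (-(2 * rho m₁ m₂ * (s - t))) * Del m₁ m₂ s) := by
            gcongr; exact Del_le_of_le m₁ m₂ ht hts.le
        _ = 2 ^ m₂ * Real.exp (-(2 * rho m₁ m₂ * (s - t))) *
            (‖bfun m₁ m₂ l s‖ * Del m₁ m₂ s) := by ring
        _ ≤ _ := mul_le_mul_of_nonneg_left (hB' s hs) (by positivity)
    calc _ ≤ 2 ^ m₂ * Real.exp (-(2 * rho m₁ m₂ * (s - t))) * (B * Real.exp (δ * s)) *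
          (A * Real.exp (-(δ * t))) * X :=
          mul_le_mul (mul_le_mul h3 (hA' t ht) (by positivity) (by positivity))
            (hX' t ht) (norm_nonneg _) (by positivity)
      _ = B * 2 ^ m₂ * A * X * (Real.exp (-(2 * rho m₁ m₂ * (s - t))) *
          Real.exp (δ * s) * Real.exp (-(δ * t))) := by ring
      _ ≤ _ := by
        rw [← Real.exp_add, ← Real.exp_add]
        gcongr
        have : 0 ≤ l.im * (s - t) := mul_nonneg hl₀.le (by linarith)
        rw [hδ]
        nlinarith
  rw [e]
  refine (norm_sub_le _ _).trans ((add_le_add h1 h2).trans_eq ?_)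
  ring

lemma integrableOn_resolventKernel (m₁ m₂ : ℕ) (hm₁ : 1 ≤ m₁) {l : ℂ} (hl₀ : 0 < l.im)
    (hl₁ : l.im < rho m₁ m₂) (ξ : ℝ) :
    ∃ C : ℝ, ∀ s : ℝ, IntegrableOn (resolventKernel m₁ m₂ l ξ s) (Ioo 0 s) ∧
      ∫ t in Ioo 0 s, ‖resolventKernel m₁ m₂ l ξ s t‖ ≤ C := by
  obtain ⟨M, hM, h⟩ := norm_resolventKernel_le m₁ m₂ hm₁ hl₀ hl₁ ξ
  set δ := rho m₁ m₂ - l.im with hδ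
  have hδ0 : 0 < δ := by linarith
  refine ⟨M / δ, fun s => ?_⟩
  have hI : IntegrableOn (fun t => M * Real.exp (-(δ * s)) * Real.exp (δ * t)) (Iic s) :=
    (integrableOn_exp_mul_Iic hδ0 s).const_mul _
  have hsub : Ioo 0 s ⊆ Iic s := fun t ht => ht.2.le
  have hb : ∀ t ∈ Ioo 0 s, ‖resolventKernel m₁ m₂ l ξ s t‖ ≤
      M * Real.exp (-(δ * s)) * Real.exp (δ * t) := fun t ht => by
    refine (h s t ht.1 ht.2).trans_eq ?_
    rw [mul_assoc, ← Real.exp_add]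
    congr 2
    ring
  have hint : IntegrableOn (resolventKernel m₁ m₂ l ξ s) (Ioo 0 s) :=
    (hI.mono_set hsub).mono' (((continuousOn_resolventKernel m₁ m₂ hl₀ ξ s).mono
      Ioo_subset_Ioi_self).aestronglyMeasurable measurableSet_Ioo)
      ((ae_restrict_iff' measurableSet_Ioo).2 (.of_forall hb))
  refine ⟨hint, ?_⟩
  calc _ ≤ ∫ t in Ioo 0 s, M * Real.exp (-(δ * s)) * Real.exp (δ * t) :=
        setIntegral_mono_on hint.norm (hI.mono_set hsub) measurableSet_Ioo hb
    _ ≤ ∫ t in Iic s, M * Real.exp (-(δ * s)) * Real.exp (δ * t) :=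
        setIntegral_mono_set hI (.of_forall fun t => by positivity) hsub.eventuallyLE
    _ = M / δ := by
        rw [integral_const_mul, integral_exp_mul_Iic hδ0, Real.exp_neg]
        have := Real.exp_pos (δ * s)
        field_simp

lemma integral_resolventKernel (m₁ m₂ : ℕ) (hm₁ : 1 ≤ m₁) {l : ℂ} (hl₀ : 0 < l.im)
    (hl₁ : l.im < rho m₁ m₂) (ξ : ℝ) {s : ℝ} (hs : 0 < s) :
    ∫ t in Ioo 0 s, resolventKernel m₁ m₂ l ξ s t =
      (sph m₁ m₂ l s - sph m₁ m₂ ξ s) / ((ξ : ℂ) ^ 2 - l ^ 2) := by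
  obtain ⟨C, hC⟩ := integrableOn_resolventKernel m₁ m₂ hm₁ hl₀ hl₁ ξ
  have hint := (hC s).1
  have hu := (isRadialEigen_bfun m₁ m₂ hl₀).comb (isRadialEigen_sph m₁ m₂ l)
    (sph m₁ m₂ l s) (-bfun m₁ m₂ l s)
  have hd (t : ℝ) (ht : 0 < t) :=
    (hu.hasDerivAt_wronskian (isRadialEigen_sph m₁ m₂ ξ) ht).congr_deriv
      (g' := (l ^ 2 - (ξ : ℂ) ^ 2) * resolventKernel m₁ m₂ l ξ s t) (by
        rw [resolventKernel]; ring)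
  have h0 := ((tendsto_bfun_wronskian m₁ m₂ hm₁ hl₀ hl₁ ξ).const_mul (sph m₁ m₂ l s)).add
    ((tendsto_sph_wronskian m₁ m₂ hm₁ l ξ).const_mul (-bfun m₁ m₂ l s))
  have hne : (ξ : ℂ) ^ 2 - l ^ 2 ≠ 0 := by
    intro h
    rcases sq_eq_sq_iff_eq_or_eq_neg.1 (sub_eq_zero.1 h) with h | h
    · have := congrArg Complex.im h
      simp at this
      linarith
    · have := congrArg Complex.im h
      simp at this
      linarith
  have := intervalIntegral.integral_eq_sub_of_hasDerivAt_of_tendsto hs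
    (fun t ht => hd t ht.1)
    ((intervalIntegrable_iff_integrableOn_Ioo_of_le hs.le).2 (hint.const_mul _))
    (h0.congr fun t => by ring) ((hd s hs).continuousAt.tendsto.mono_left nhdsWithin_le_nhds)
  rw [intervalIntegral.integral_of_le hs.le, integral_Ioc_eq_integral_Ioo, integral_const_mul]
    at this
  have hW := bfun_wronskian_eq_one m₁ m₂ hm₁ hl₀ hl₁ hs
  rw [eq_div_iff hne]
  linear_combination -this - sph m₁ m₂ ξ s * hW

lemma integrable_mul_Del {m₁ m₂ : ℕ} {f : ℝ → ℂ} (hf : Measurable f)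
    (hf₁ : IntegrableOn (fun s : ℝ => ‖f s‖ * Del m₁ m₂ s) (Ioi 0)) :
    IntegrableOn (fun s => f s * (Del m₁ m₂ s : ℂ)) (Ioi 0) := by
  refine hf₁.mono' ?_ ((ae_restrict_iff' measurableSet_Ioi).2 (.of_forall fun s hs => ?_))
  · exact (hf.mul (Complex.measurable_ofReal.comp
      (continuous_Del m₁ m₂).measurable)).aestronglyMeasurable
  · rw [norm_mul, Complex.norm_real, Real.norm_of_nonneg (Del_pos m₁ m₂ hs).le]

lemma integrableOn_mul_sph {m₁ m₂ : ℕ} {f : ℝ → ℂ} (hf : Measurable f)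
    (hf₁ : IntegrableOn (fun s : ℝ => ‖f s‖ * Del m₁ m₂ s) (Ioi 0)) {l : ℂ} {C : ℝ}
    (h : ∀ s, 0 < s → ‖sph m₁ m₂ l s‖ ≤ C) :
    IntegrableOn (fun s => f s * sph m₁ m₂ l s * (Del m₁ m₂ s : ℂ)) (Ioi 0) := by
  have := (integrable_mul_Del hf hf₁).mul_bdd (c := C)
    ((continuousOn_sph m₁ m₂ l).aestronglyMeasurable measurableSet_Ioi)
    ((ae_restrict_iff' measurableSet_Ioi).2 (.of_forall h))
  refine this.congr (.of_forall fun s => ?_)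
  simp only
  ring

lemma exists_norm_sph_le (m₁ m₂ : ℕ) {l : ℂ} (hl₀ : 0 < l.im) (hl₁ : l.im < rho m₁ m₂) :
    ∃ C : ℝ, ∀ t : ℝ, 0 < t → ‖sph m₁ m₂ l t‖ ≤ C := by
  obtain ⟨C, hC, h⟩ := norm_sph_le m₁ m₂ hl₀ hl₁
  refine ⟨C, fun t ht => (h t ht).trans (mul_le_of_le_one_right hC (Real.exp_le_one_iff.2 ?_))⟩
  have : 0 ≤ (rho m₁ m₂ - l.im) * t := mul_nonneg (by linarith) ht.le
  linarith

lemma exists_norm_bfun_le (m₁ m₂ : ℕ) (hm₁ : 1 ≤ m₁) {l : ℂ} (hl₀ : 0 < l.im)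
    (hl₁ : l.im < rho m₁ m₂) {t : ℝ} (ht : 0 < t) :
    ∃ C : ℝ, ∀ s : ℝ, t < s → ‖bfun m₁ m₂ l s‖ ≤ C := by
  obtain ⟨B, hB, hB'⟩ := norm_bfun_le m₁ m₂ hm₁ hl₀ hl₁
  have hD := Del_pos m₁ m₂ ht
  refine ⟨2 ^ m₂ * B * Real.exp (2 * rho m₁ m₂ * t) / Del m₁ m₂ t, fun s hts => ?_⟩
  rw [le_div_iff₀ hD]
  calc _ ≤ ‖bfun m₁ m₂ l s‖ *
        (2 ^ m₂ * Real.exp (-(2 * rho m₁ m₂ * (s - t))) * Del m₁ m₂ s) := by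
        gcongr; exact Del_le_of_le m₁ m₂ ht hts.le
    _ = 2 ^ m₂ * Real.exp (-(2 * rho m₁ m₂ * (s - t))) *
        (‖bfun m₁ m₂ l s‖ * Del m₁ m₂ s) := by ring
    _ ≤ 2 ^ m₂ * Real.exp (-(2 * rho m₁ m₂ * (s - t))) *
        (B * Real.exp ((rho m₁ m₂ - l.im) * s)) :=
        mul_le_mul_of_nonneg_left (hB' s (ht.trans hts)) (by positivity)
    _ = 2 ^ m₂ * B * (Real.exp (-(2 * rho m₁ m₂ * (s - t))) *
        Real.exp ((rho m₁ m₂ - l.im) * s)) := by ring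
    _ ≤ _ := by
        rw [← Real.exp_add]
        gcongr
        have : 0 ≤ (rho m₁ m₂ + l.im) * s := mul_nonneg (by linarith) (ht.trans hts).le
        nlinarith

/-- The integrand of the double integral computing the spherical transform of `Tfun f`. -/
def resolventIntegrand (m₁ m₂ : ℕ) (l : ℂ) (ξ : ℝ) (f : ℝ → ℂ) (p : ℝ × ℝ) : ℂ :=
  {p : ℝ × ℝ | p.1 < p.2}.indicator
    (fun p => f p.2 * (Del m₁ m₂ p.2 : ℂ) * resolventKernel m₁ m₂ l ξ p.2 p.1) p

lemma aestronglyMeasurable_resolventIntegrand (m₁ m₂ : ℕ) {l : ℂ} (hl₀ : 0 < l.im) (ξ : ℝ)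
    {f : ℝ → ℂ} (hf : Measurable f) :
    AEStronglyMeasurable (resolventIntegrand m₁ m₂ l ξ f)
      ((volume.restrict (Ioi (0 : ℝ))).prod (volume.restrict (Ioi (0 : ℝ)))) := by
  have hs (k : ℂ) : AEStronglyMeasurable (sph m₁ m₂ k) (volume.restrict (Ioi (0 : ℝ))) :=
    (continuousOn_sph m₁ m₂ k).aestronglyMeasurable measurableSet_Ioi
  have hb : AEStronglyMeasurable (bfun m₁ m₂ l) (volume.restrict (Ioi (0 : ℝ))) :=
    (continuousOn_bfun m₁ m₂ hl₀).aestronglyMeasurable measurableSet_Ioi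
  have hD : AEStronglyMeasurable (fun t => (Del m₁ m₂ t : ℂ)) (volume.restrict (Ioi (0 : ℝ))) :=
    (Complex.continuous_ofReal.comp (continuous_Del m₁ m₂)).aestronglyMeasurable
  refine AEStronglyMeasurable.indicator ?_ (measurableSet_lt measurable_fst measurable_snd)
  exact (hf.aestronglyMeasurable.comp_snd.mul hD.comp_snd).mul
    ((((hs l).comp_snd.mul hb.comp_fst).sub (hb.comp_snd.mul (hs l).comp_fst)).mul
      (hs ξ).comp_fst |>.mul hD.comp_fst)

lemma integrable_resolventIntegrand (m₁ m₂ : ℕ) (hm₁ : 1 ≤ m₁) {l : ℂ} (hl₀ : 0 < l.im)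
    (hl₁ : l.im < rho m₁ m₂) (ξ : ℝ) {f : ℝ → ℂ} (hf : Measurable f)
    (hf₁ : IntegrableOn (fun s : ℝ => ‖f s‖ * Del m₁ m₂ s) (Ioi 0)) :
    Integrable (resolventIntegrand m₁ m₂ l ξ f)
      ((volume.restrict (Ioi (0 : ℝ))).prod (volume.restrict (Ioi (0 : ℝ)))) := by
  have hm := aestronglyMeasurable_resolventIntegrand m₁ m₂ hl₀ ξ hf
  obtain ⟨C, hC⟩ := integrableOn_resolventKernel m₁ m₂ hm₁ hl₀ hl₁ ξ
  have e (s : ℝ) : (fun t => resolventIntegrand m₁ m₂ l ξ f (t, s)) =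
      (Iio s).indicator fun t => f s * (Del m₁ m₂ s : ℂ) * resolventKernel m₁ m₂ l ξ s t := by
    funext t
    simp [resolventIntegrand, indicator]
  refine (integrable_prod_iff' hm).2 ⟨.of_forall fun s => ?_, ?_⟩
  · rw [e, integrable_indicator_iff measurableSet_Iio, IntegrableOn,
      Measure.restrict_restrict measurableSet_Iio, inter_comm, Ioi_inter_Iio]
    exact (hC s).1.const_mul _
  · refine (hf₁.mul_const C).mono' hm.norm.prod_swap.integral_prod_right'
      ((ae_restrict_iff' measurableSet_Ioi).2 (.of_forall fun s hs => ?_))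
    have e2 : (fun t => ‖resolventIntegrand m₁ m₂ l ξ f (t, s)‖) = (Iio s).indicator
        fun t => ‖f s‖ * Del m₁ m₂ s * ‖resolventKernel m₁ m₂ l ξ s t‖ := by
      funext t
      rw [congrFun (e s) t, norm_indicator_eq_indicator_norm]
      simp only [norm_mul, Complex.norm_real, Real.norm_of_nonneg (Del_pos m₁ m₂ hs).le]
    rw [Real.norm_of_nonneg (integral_nonneg fun _ => norm_nonneg _), e2,
      integral_indicator measurableSet_Iio, Measure.restrict_restrict measurableSet_Iio,
      inter_comm, Ioi_inter_Iio, integral_const_mul]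
    have := (Del_pos m₁ m₂ hs).le
    exact mul_le_mul_of_nonneg_left (hC s).2 (by positivity)

lemma integral_resolventIntegrand_left (m₁ m₂ : ℕ) (hm₁ : 1 ≤ m₁) {l : ℂ} (hl₀ : 0 < l.im)
    (hl₁ : l.im < rho m₁ m₂) (ξ : ℝ) (f : ℝ → ℂ) {s : ℝ} (hs : 0 < s) :
    ∫ t in Ioi (0 : ℝ), resolventIntegrand m₁ m₂ l ξ f (t, s) =
      f s * (Del m₁ m₂ s : ℂ) *
        ((sph m₁ m₂ l s - sph m₁ m₂ ξ s) / ((ξ : ℂ) ^ 2 - l ^ 2)) := by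
  have e : (fun t => resolventIntegrand m₁ m₂ l ξ f (t, s)) =
      (Iio s).indicator fun t => f s * (Del m₁ m₂ s : ℂ) * resolventKernel m₁ m₂ l ξ s t := by
    funext t
    simp [resolventIntegrand, indicator]
  rw [e, integral_indicator measurableSet_Iio, Measure.restrict_restrict measurableSet_Iio,
    inter_comm, Ioi_inter_Iio, integral_const_mul,
    integral_resolventKernel m₁ m₂ hm₁ hl₀ hl₁ ξ hs]

lemma integral_resolventIntegrand_right (m₁ m₂ : ℕ) (hm₁ : 1 ≤ m₁) {l : ℂ} (hl₀ : 0 < l.im)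
    (hl₁ : l.im < rho m₁ m₂) (ξ : ℝ) {f : ℝ → ℂ} (hf : Measurable f)
    (hf₁ : IntegrableOn (fun s : ℝ => ‖f s‖ * Del m₁ m₂ s) (Ioi 0)) {t : ℝ} (ht : 0 < t) :
    ∫ s in Ioi (0 : ℝ), resolventIntegrand m₁ m₂ l ξ f (t, s) =
      Tfun m₁ m₂ l f t * sph m₁ m₂ ξ t * (Del m₁ m₂ t : ℂ) := by
  obtain ⟨A, hA⟩ := exists_norm_sph_le m₁ m₂ hl₀ hl₁
  obtain ⟨B, hB⟩ := exists_norm_bfun_le m₁ m₂ hm₁ hl₀ hl₁ ht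
  have hsub : Ioi t ⊆ Ioi 0 := Ioi_subset_Ioi ht.le
  have h1 : IntegrableOn (fun s => f s * sph m₁ m₂ l s * (Del m₁ m₂ s : ℂ)) (Ioi t) :=
    (integrableOn_mul_sph hf hf₁ hA).mono_set hsub
  have h2 : IntegrableOn (fun s => f s * bfun m₁ m₂ l s * (Del m₁ m₂ s : ℂ)) (Ioi t) := by
    have := ((integrable_mul_Del hf hf₁).mono_set hsub).mul_bdd (c := B)
      (((continuousOn_bfun m₁ m₂ hl₀).mono hsub).aestronglyMeasurable measurableSet_Ioi)
      ((ae_restrict_iff' measurableSet_Ioi).2 (.of_forall hB))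
    refine this.congr (.of_forall fun s => ?_)
    simp only
    ring
  have e : (fun s => resolventIntegrand m₁ m₂ l ξ f (t, s)) = (Ioi t).indicator
      fun s => (bfun m₁ m₂ l t * (f s * sph m₁ m₂ l s * (Del m₁ m₂ s : ℂ)) -
        sph m₁ m₂ l t * (f s * bfun m₁ m₂ l s * (Del m₁ m₂ s : ℂ))) *
          (sph m₁ m₂ ξ t * (Del m₁ m₂ t : ℂ)) := by
    funext s
    simp only [resolventIntegrand, resolventKernel, indicator, mem_ofPred_eq, mem_Ioi]
    split_ifs
    · ring
    · rfl
  rw [e, integral_indicator measurableSet_Ioi, Measure.restrict_restrict measurableSet_Ioi,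
    inter_eq_left.2 hsub, integral_mul_const,
    integral_sub (h1.const_mul _) (h2.const_mul _), integral_const_mul, integral_const_mul, Tfun,
    mul_assoc]

end

theorem stmt10 (m₁ m₂ : ℕ) (hm₁ : 1 ≤ m₁) (l : ℂ) (hl₀ : 0 < l.im) (hl₁ : l.im < rho m₁ m₂)
    (f : ℝ → ℂ) (hf : Measurable f)
    (hf₁ : IntegrableOn (fun s : ℝ => ‖f s‖ * Del m₁ m₂ s) (Set.Ioi 0))
    (fhat : ℂ → ℂ)
    (hfhat : ∀ μ : ℂ, |μ.im| ≤ rho m₁ m₂ →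
      fhat μ = ∫ s in Set.Ioi (0 : ℝ), f s * sph m₁ m₂ μ s * (Del m₁ m₂ s : ℂ)) (ξ : ℝ) :
    IntegrableOn
      (fun t : ℝ => Tfun m₁ m₂ l f t * sph m₁ m₂ (ξ : ℂ) t * (Del m₁ m₂ t : ℂ))
      (Set.Ioi 0) ∧
    (∫ t in Set.Ioi (0 : ℝ), Tfun m₁ m₂ l f t * sph m₁ m₂ (ξ : ℂ) t * (Del m₁ m₂ t : ℂ)) =
      (fhat l - fhat (ξ : ℂ)) / ((ξ : ℂ) ^ 2 - l ^ 2) := by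
  have hint := integrable_resolventIntegrand m₁ m₂ hm₁ hl₀ hl₁ ξ hf hf₁
  have hT : ∀ t ∈ Ioi (0 : ℝ), ∫ s in Ioi (0 : ℝ), resolventIntegrand m₁ m₂ l ξ f (t, s) =
      Tfun m₁ m₂ l f t * sph m₁ m₂ ξ t * (Del m₁ m₂ t : ℂ) := fun t ht =>
    integral_resolventIntegrand_right m₁ m₂ hm₁ hl₀ hl₁ ξ hf hf₁ ht
  refine ⟨hint.integral_prod_left.congr
    ((ae_restrict_iff' measurableSet_Ioi).2 (.of_forall hT)), ?_⟩
  obtain ⟨A, hA⟩ := exists_norm_sph_le m₁ m₂ hl₀ hl₁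
  obtain ⟨X, -, hX⟩ := norm_sph_ofReal_le m₁ m₂ hm₁ ξ
  rw [hfhat l (by rw [abs_of_pos hl₀]; exact hl₁.le),
    hfhat ξ (by rw [Complex.ofReal_im, abs_zero]; linarith),
    ← integral_sub (integrableOn_mul_sph hf hf₁ hA) (integrableOn_mul_sph hf hf₁ hX),
    ← setIntegral_congr_fun measurableSet_Ioi hT, ← integral_prod _ hint,
    integral_prod_symm _ hint, ← integral_div]
  refine setIntegral_congr_fun measurableSet_Ioi fun s hs => ?_
  rw [integral_resolventIntegrand_left m₁ m₂ hm₁ hl₀ hl₁ ξ f hs]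
  ring

end
end

section
/- Let a, b, c > 0 be fixed real numbers and fix δ ∈ (0, π). Then there exist constants C₁, C₂ > 0 such that for every z ∈ ℂ∖{0} with |arg z| ≤ π − δ, C₁ · 2^{−Re z} (1+|z|)^{a+b−c−1/2} ≤ |Γ(a + z/2) Γ(b + z/2)/Γ(c + z)| ≤ C₂ · 2^{−Re z} (1+|z|)^{a+b−c−1/2}. -/
open Complex

/-- First order expansion of `q ↦ log ‖u + q‖`, with an error controlled by a common lower bound
`m` of `‖u‖` and `‖u + q‖`. -/
lemma abs_log_norm_add_ofReal_sub_le {u : ℂ} {q m m₀ : ℝ} (hm₀ : 0 < m₀) (hm : m₀ ≤ m)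
    (hu : m ≤ ‖u‖) (huq : m ≤ ‖u + q‖) :
    |Real.log ‖u + q‖ - Real.log ‖u‖ - q * (u.re / ‖u‖ ^ 2)| ≤
      ((2 * |q| + q ^ 2 / m₀) ^ 2 + q ^ 2) / 2 / m ^ 2 := by
  have hmpos : 0 < m := hm₀.trans_le hm
  have hX : 0 < ‖u‖ := hmpos.trans_le hu
  have hY : 0 < ‖u + q‖ := hmpos.trans_le huq
  have hXY : ‖u + q‖ ^ 2 = ‖u‖ ^ 2 + (2 * q * u.re + q ^ 2) := by
    rw [← normSq_eq_norm_sq, ← normSq_eq_norm_sq, normSq_apply, normSq_apply]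
    simp only [add_re, add_im, ofReal_re, ofReal_im]
    ring
  have hre : |u.re| ≤ ‖u‖ := abs_re_le_norm u
  generalize ‖u‖ = X at *
  generalize ‖u + q‖ = Y at *
  generalize u.re = r at *
  have hinv : 1 / X ^ 2 ≤ 1 / m ^ 2 := by gcongr
  have hinv' : 1 / Y ^ 2 ≤ 1 / m ^ 2 := by gcongr
  have hnum : (2 * q * r + q ^ 2) ^ 2 / X ^ 2 ≤ (2 * |q| + q ^ 2 / m₀) ^ 2 := by
    rw [← div_pow]
    apply sq_le_sq'
    all_goals
      have h1 : |(2 * q * r + q ^ 2) / X| ≤ 2 * |q| + q ^ 2 / m₀ := by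
        rw [abs_div, abs_of_pos hX, div_le_iff₀ hX]
        have h2 : |2 * q * r + q ^ 2| ≤ 2 * |q| * |r| + q ^ 2 := by
          refine (abs_add_le _ _).trans (le_of_eq ?_)
          rw [abs_mul, abs_mul, abs_of_pos (two_pos : (0 : ℝ) < 2), abs_of_nonneg (sq_nonneg q)]
        have h3 : q ^ 2 ≤ q ^ 2 / m₀ * X := by
          rw [div_mul_eq_mul_div, le_div_iff₀ hm₀]
          gcongr
          exact hm.trans hu
        have h4 : 2 * |q| * |r| ≤ 2 * |q| * X := by gcongr
        linarith
    · exact (abs_le.1 h1).1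
    · exact (abs_le.1 h1).2
  have hlogX : Real.log (X ^ 2) = 2 * Real.log X := by simp
  have hlogY : Real.log (Y ^ 2) = 2 * Real.log Y := by simp
  have hup : 2 * Real.log Y - 2 * Real.log X ≤ Y ^ 2 / X ^ 2 - 1 := by
    have := Real.log_le_sub_one_of_pos (x := Y ^ 2 / X ^ 2) (by positivity)
    rwa [Real.log_div (by positivity) (by positivity), hlogX, hlogY] at this
  have hlo : 2 * Real.log X - 2 * Real.log Y ≤ X ^ 2 / Y ^ 2 - 1 := by
    have := Real.log_le_sub_one_of_pos (x := X ^ 2 / Y ^ 2) (by positivity)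
    rwa [Real.log_div (by positivity) (by positivity), hlogX, hlogY] at this
  have e1 : Y ^ 2 / X ^ 2 - 1 = 2 * (q * (r / X ^ 2)) + q ^ 2 * (1 / X ^ 2) := by
    rw [hXY]; field_simp; ring
  have e2 : X ^ 2 / Y ^ 2 - 1 = -(2 * (q * (r / X ^ 2)) + q ^ 2 * (1 / X ^ 2)) +
      (2 * q * r + q ^ 2) ^ 2 / X ^ 2 * (1 / Y ^ 2) := by
    have : X ^ 2 = Y ^ 2 - (2 * q * r + q ^ 2) := by linarith
    field_simp
    rw [this]
    ring
  have h5 : q ^ 2 * (1 / X ^ 2) ≤ q ^ 2 * (1 / m ^ 2) := by gcongr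
  have h6 : (2 * q * r + q ^ 2) ^ 2 / X ^ 2 * (1 / Y ^ 2) ≤
      (2 * |q| + q ^ 2 / m₀) ^ 2 * (1 / m ^ 2) := by gcongr
  have h7 : 0 ≤ q ^ 2 * (1 / X ^ 2) := by positivity
  have h8 : 0 ≤ (2 * |q| + q ^ 2 / m₀) ^ 2 * (1 / m ^ 2) := by positivity
  have e3 : ((2 * |q| + q ^ 2 / m₀) ^ 2 + q ^ 2) / 2 / m ^ 2 =
      ((2 * |q| + q ^ 2 / m₀) ^ 2 * (1 / m ^ 2) + q ^ 2 * (1 / m ^ 2)) / 2 := by ring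
  rw [abs_le, e3]
  constructor <;> linarith

/-- On a sector around the positive axis, `‖w + x‖` is comparable with `‖w‖ + x` for `x ≥ 0`. -/
lemma mul_norm_add_le_norm_add_ofReal {δ : ℝ} {z : ℂ} (hδ : 0 ≤ δ)
    (hz : |arg z| ≤ Real.pi - δ) {x : ℝ} (hx : 0 ≤ x) :
    √((1 - Real.cos δ) / 2) * (‖z‖ + x) ≤ ‖z + x‖ := by
  have hcos : -Real.cos δ ≤ Real.cos (arg z) := by
    rw [← Real.cos_abs (arg z), ← Real.cos_pi_sub]
    exact Real.cos_le_cos_of_nonneg_of_le_pi (abs_nonneg _) (by linarith) hz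
  have hre : z.re = ‖z‖ * Real.cos (arg z) := (norm_mul_cos_arg z).symm
  have hle : -(‖z‖ * Real.cos δ) ≤ z.re := by
    rw [hre]
    nlinarith [norm_nonneg z]
  have hsq : ‖z + x‖ ^ 2 = ‖z‖ ^ 2 + (2 * x * z.re + x ^ 2) := by
    rw [← normSq_eq_norm_sq, ← normSq_eq_norm_sq, normSq_apply, normSq_apply]
    simp only [add_re, add_im, ofReal_re, ofReal_im]
    ring
  have h1 := Real.cos_le_one δ
  have h2 := Real.neg_one_le_cos δ
  refine abs_le_of_sq_le_sq' ?_ (norm_nonneg _) |>.2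
  rw [mul_pow, Real.sq_sqrt (by linarith), hsq]
  nlinarith [mul_le_mul_of_nonneg_left hle hx,
    mul_nonneg (by linarith : 0 ≤ 1 + Real.cos δ) (sq_nonneg (‖z‖ - x))]

lemma log_norm_GammaSeq {s : ℂ} (hs : ∀ j : ℕ, s + j ≠ 0) {n : ℕ} (hn : n ≠ 0) :
    Real.log ‖GammaSeq s n‖ = s.re * Real.log n + Real.log n.factorial -
      ∑ j ∈ Finset.range (n + 1), Real.log ‖s + j‖ := by
  have hn' : (0 : ℝ) < n := by positivity
  have hpow : ‖(n : ℂ) ^ s‖ = (n : ℝ) ^ s.re := norm_natCast_cpow_of_pos (by omega) s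
  rw [GammaSeq, norm_div, norm_mul, hpow, norm_natCast, norm_prod,
    Real.log_div (by positivity) (Finset.prod_ne_zero_iff.2 fun j _ => norm_ne_zero_iff.2 (hs j)),
    Real.log_mul (by positivity) (by positivity), Real.log_rpow hn',
    Real.log_prod fun j _ => norm_ne_zero_iff.2 (hs j)]

/-- Where `‖w + x‖` is comparable with `‖w‖ + x` for all `x ≥ 0`, the quotient
`‖Γ(w + p)‖ / ‖Γ(w + 1)‖` is comparable with `(1 + ‖w‖) ^ (p - 1)`. -/
lemma exists_abs_log_norm_Gamma_sub_le {c p : ℝ} (hc : 0 < c) (hp : 0 < p) :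
    ∃ K : ℝ, ∀ w : ℂ, (∀ x : ℝ, 0 ≤ x → c * (‖w‖ + x) ≤ ‖w + x‖) →
      |Real.log ‖Gamma (w + p)‖ - Real.log ‖Gamma (w + 1)‖ - (p - 1) * Real.log (1 + ‖w‖)| ≤ K := by
  set m₀ := c * min p 1 with hm₀def
  have hmin : 0 < min p 1 := lt_min hp one_pos
  have hm₀ : 0 < m₀ := by positivity
  set A : ℝ → ℝ := fun q => ((2 * |q| + q ^ 2 / m₀) ^ 2 + q ^ 2) / 2
  set B := (A (p - 1) + |p - 1| * A 1) / m₀ ^ 2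
  have hB : 0 ≤ B := by positivity
  have hsum : Summable fun j : ℕ => 1 / ((j : ℝ) + 1) ^ 2 := by
    have := (summable_nat_add_iff 1).2 (Real.summable_one_div_nat_pow.2 one_lt_two)
    simpa using this
  set S := ∑' j : ℕ, 1 / ((j : ℝ) + 1) ^ 2
  refine ⟨|p - 1| * Real.log 2 + B * S + |p - 1| * |Real.log c|, fun w hw => ?_⟩
  have hlow {x : ℝ} (j : ℕ) (hx : min p 1 ≤ x) : m₀ * (j + 1) ≤ ‖w + x + j‖ := by
    have h1 := hw (x + j) (add_nonneg (hmin.le.trans hx) j.cast_nonneg)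
    have h2 : m₀ * (j + 1) ≤ c * (‖w‖ + (x + j)) := by
      rw [hm₀def, mul_assoc]
      have : min p 1 ≤ 1 := min_le_right _ _
      have hj : (0 : ℝ) ≤ j := by positivity
      gcongr
      nlinarith [norm_nonneg w]
    calc _ ≤ _ := h2
      _ ≤ _ := h1
      _ = _ := by push_cast; rw [add_assoc]
  have hpos {x : ℝ} (j : ℕ) (hx : min p 1 ≤ x) : 0 < ‖w + x + j‖ :=
    lt_of_lt_of_le (by positivity) (hlow j hx)
  have hne {x : ℝ} (hx : min p 1 ≤ x) (j : ℕ) : w + x + j ≠ 0 := norm_pos_iff.1 (hpos j hx)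
  have hp1 := min_le_left p 1
  have h11 := min_le_right p 1
  have hterm (j : ℕ) : |Real.log ‖w + p + j‖ - Real.log ‖w + (1 : ℝ) + j‖ -
      (p - 1) * (Real.log ‖w + (1 : ℝ) + (j + 1 : ℕ)‖ - Real.log ‖w + (1 : ℝ) + j‖)| ≤
      B * (1 / ((j : ℝ) + 1) ^ 2) := by
    have hm : m₀ ≤ m₀ * (j + 1) := by nlinarith [(by positivity : (0 : ℝ) ≤ j)]
    have e1 : w + (1 : ℝ) + j + ((p - 1 : ℝ) : ℂ) = w + p + j := by push_cast; ring
    have e2 : w + (1 : ℝ) + j + ((1 : ℝ) : ℂ) = w + (1 : ℝ) + (j + 1 : ℕ) := by push_cast; ring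
    have k1 := abs_log_norm_add_ofReal_sub_le (q := p - 1) hm₀ hm (hlow j h11)
      (by rw [e1]; exact hlow j hp1)
    have k2 := abs_log_norm_add_ofReal_sub_le (q := 1) hm₀ hm (hlow j h11)
      (by
        rw [e2]
        refine le_trans ?_ (hlow (j + 1) h11)
        push_cast
        nlinarith)
    rw [e1] at k1
    rw [e2] at k2
    have k3 := mul_le_mul_of_nonneg_left k2 (abs_nonneg (p - 1))
    rw [← abs_mul] at k3
    have e3 : B * (1 / ((j : ℝ) + 1) ^ 2) = A (p - 1) / (m₀ * (j + 1)) ^ 2 +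
        |p - 1| * (A 1 / (m₀ * (j + 1)) ^ 2) := by
      simp only [B]
      field_simp
    rw [e3]
    refine le_trans (le_of_eq ?_) ((abs_sub _ _).trans (add_le_add k1 k3))
    congr 1
    ring
  have hGamma {x : ℝ} (hx : min p 1 ≤ x) :
      Filter.Tendsto (fun n => Real.log ‖GammaSeq (w + x) n‖) Filter.atTop
        (nhds (Real.log ‖Gamma (w + x)‖)) := by
    refine ((GammaSeq_tendsto_Gamma (w + x)).norm).log (norm_ne_zero_iff.2 ?_)
    exact Gamma_ne_zero fun m hm => hne hx m (by rw [hm]; ring)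
  have hlim := (((hGamma hp1).sub (hGamma h11)).sub_const ((p - 1) * Real.log (1 + ‖w‖))).abs
  rw [ofReal_one] at hlim
  refine le_of_tendsto hlim ?_
  obtain ⟨N, hN⟩ := exists_nat_ge (2 * ‖w‖ + 2)
  filter_upwards [Filter.eventually_ge_atTop (N + 1)] with n hn
  have hn0 : n ≠ 0 := by omega
  have hnR : (0 : ℝ) < n := by positivity
  have hnw : 2 * ‖w‖ + 2 ≤ n := hN.trans (by exact_mod_cast (by omega : N ≤ n))
  have l1 := log_norm_GammaSeq (hne hp1) hn0
  have l2 := log_norm_GammaSeq (hne h11) hn0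
  simp only [add_re, ofReal_re] at l1 l2
  rw [ofReal_one] at l2
  have htel := Finset.sum_range_sub (fun j : ℕ => Real.log ‖w + (1 : ℝ) + j‖) (n + 1)
  have herr : |∑ j ∈ Finset.range (n + 1), (Real.log ‖w + p + j‖ - Real.log ‖w + (1 : ℝ) + j‖ -
      (p - 1) * (Real.log ‖w + (1 : ℝ) + (j + 1 : ℕ)‖ - Real.log ‖w + (1 : ℝ) + j‖))| ≤ B * S := by
    refine (Finset.abs_sum_le_sum_abs _ _).trans ((Finset.sum_le_sum fun j _ => hterm j).trans ?_)
    rw [← Finset.mul_sum]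
    exact mul_le_mul_of_nonneg_left
      (hsum.sum_le_tsum _ fun j _ => by positivity) hB
  rw [Finset.sum_sub_distrib, Finset.sum_sub_distrib, ← Finset.mul_sum, htel] at herr
  simp only [ofReal_one, Nat.cast_zero, add_zero] at herr
  have hend : |Real.log n - Real.log ‖w + 1 + (n + 1 : ℕ)‖| ≤ Real.log 2 := by
    have hcast : ‖((n : ℂ) + 2)‖ = n + 2 := by
      have : ((n : ℂ) + 2) = ((n + 2 : ℕ) : ℂ) := by push_cast; rfl
      rw [this, Complex.norm_natCast]; push_cast; rfl
    have e : w + 1 + (n + 1 : ℕ) = ((n : ℂ) + 2) + w := by push_cast; ring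
    have hu := norm_add_le ((n : ℂ) + 2) w
    have hl := norm_sub_le_norm_add ((n : ℂ) + 2) w
    rw [← e, hcast] at hu hl
    have hpos' : 0 < ‖w + 1 + (n + 1 : ℕ)‖ := by linarith [norm_nonneg w]
    rw [abs_le]
    constructor
    · have := Real.log_le_log hpos' (by linarith : ‖w + 1 + (n + 1 : ℕ)‖ ≤ 2 * n)
      rw [Real.log_mul two_ne_zero hnR.ne'] at this
      linarith
    · have := Real.log_le_log hnR (by linarith : (n : ℝ) ≤ 2 * ‖w + 1 + (n + 1 : ℕ)‖)
      rw [Real.log_mul two_ne_zero hpos'.ne'] at this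
      linarith
  have hstart : |Real.log ‖w + 1‖ - Real.log (1 + ‖w‖)| ≤ |Real.log c| := by
    have h1 : 0 < 1 + ‖w‖ := by positivity
    have hl := hw 1 zero_le_one
    rw [ofReal_one, add_comm ‖w‖] at hl
    have hu : ‖w + 1‖ ≤ 1 + ‖w‖ := by
      simpa [add_comm] using norm_add_le w 1
    have hlog := Real.log_le_log (by positivity) hl
    rw [Real.log_mul hc.ne' h1.ne'] at hlog
    have hlog' := Real.log_le_log (lt_of_lt_of_le (by positivity) hl) hu
    rw [abs_le]
    constructor
    · linarith [neg_abs_le (Real.log c)]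
    · linarith [abs_nonneg (Real.log c)]
  have hend' := mul_le_mul_of_nonneg_left hend (abs_nonneg (p - 1))
  have hstart' := mul_le_mul_of_nonneg_left hstart (abs_nonneg (p - 1))
  rw [← abs_mul] at hend' hstart'
  refine le_trans (le_of_eq ?_)
    ((abs_add_le _ _).trans (add_le_add ((abs_sub _ _).trans (add_le_add hend' herr)) hstart'))
  rw [l1, l2]
  congr 1
  ring

theorem stmt15 (a b c : ℝ) (ha : 0 < a) (hb : 0 < b) (hc : 0 < c)
    (δ : ℝ) (hδ : 0 < δ) (hδπ : δ < Real.pi) :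
    ∃ C₁ C₂ : ℝ, 0 < C₁ ∧ 0 < C₂ ∧
      ∀ z : ℂ, z ≠ 0 → |Complex.arg z| ≤ Real.pi - δ →
        C₁ * (2 : ℝ) ^ (-z.re) * (1 + ‖z‖) ^ (a + b - c - 1 / 2) ≤
          ‖Complex.Gamma (a + z / 2) * Complex.Gamma (b + z / 2) / Complex.Gamma (c + z)‖ ∧
        ‖Complex.Gamma (a + z / 2) * Complex.Gamma (b + z / 2) / Complex.Gamma (c + z)‖ ≤
          C₂ * (2 : ℝ) ^ (-z.re) * (1 + ‖z‖) ^ (a + b - c - 1 / 2) := by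
  set k := √((1 - Real.cos δ) / 2)
  have hk : 0 < k := by
    have : Real.cos δ < 1 := by
      have := Real.cos_lt_cos_of_nonneg_of_le_pi le_rfl hδπ.le hδ
      rwa [Real.cos_zero] at this
    exact Real.sqrt_pos.2 (by linarith)
  obtain ⟨Ka, hKa⟩ := exists_abs_log_norm_Gamma_sub_le hk ha
  obtain ⟨Kb, hKb⟩ := exists_abs_log_norm_Gamma_sub_le hk hb
  obtain ⟨Kc, hKc⟩ := exists_abs_log_norm_Gamma_sub_le hk hc
  obtain ⟨Kh, hKh⟩ := exists_abs_log_norm_Gamma_sub_le hk (one_half_pos (α := ℝ))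
  set L := |a + b - 3 / 2| * Real.log 2 + Ka + Kb + Kc + Kh
  set M := Real.log (√Real.pi)
  refine ⟨Real.exp (M - L), Real.exp (M + L), Real.exp_pos _, Real.exp_pos _, fun z _ hz => ?_⟩
  have hsec : ∀ x : ℝ, 0 ≤ x → k * (‖z‖ + x) ≤ ‖z + x‖ := fun x hx =>
    mul_norm_add_le_norm_add_ofReal hδ.le hz hx
  have hnorm2 : ‖z / 2‖ = ‖z‖ / 2 := by simp
  have hsec2 : ∀ x : ℝ, 0 ≤ x → k * (‖z / 2‖ + x) ≤ ‖z / 2 + x‖ := fun x hx => by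
    have h := hsec (2 * x) (by positivity)
    have e : z / 2 + x = (z + (2 * x : ℝ)) / 2 := by push_cast; ring
    rw [hnorm2, e, norm_div, norm_ofNat]
    linarith
  have hG {w : ℂ} (hw : ∀ x : ℝ, 0 ≤ x → k * (‖w‖ + x) ≤ ‖w + x‖) {x : ℝ} (hx : 0 < x) :
      0 < ‖Gamma (w + x)‖ := by
    refine norm_pos_iff.2 (Gamma_ne_zero fun m hm => ?_)
    have h := hw (x + m) (by positivity)
    have e : w + (x + m : ℝ) = 0 := by push_cast; rw [← add_assoc, hm]; ring
    rw [e, norm_zero] at h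
    have : 0 < k * (‖w‖ + (x + m)) := by positivity
    linarith
  have qa := abs_le.1 (hKa _ hsec2)
  have qb := abs_le.1 (hKb _ hsec2)
  have qc := abs_le.1 (hKc _ hsec)
  have qh := abs_le.1 (hKh _ hsec2)
  have ga := hG hsec2 ha
  have gb := hG hsec2 hb
  have gc := hG hsec hc
  have gh := hG hsec2 (one_half_pos (α := ℝ))
  have g1 := hG hsec2 one_pos
  have g1' := hG hsec one_pos
  rw [ofReal_one] at g1 g1'
  have hdup := congrArg norm (Gamma_mul_Gamma_add_half (z / 2 + (1 / 2 : ℝ)))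
  have e1 : z / 2 + ((1 / 2 : ℝ) : ℂ) + 1 / 2 = z / 2 + 1 := by push_cast; ring
  have e2 : 2 * (z / 2 + ((1 / 2 : ℝ) : ℂ)) = z + 1 := by push_cast; ring
  have e3 : ‖(2 : ℂ) ^ (1 - (z + 1))‖ = 2 ^ (-z.re) := by
    have := norm_cpow_eq_rpow_re_of_pos (two_pos : (0 : ℝ) < 2) (1 - (z + 1))
    simpa using this
  rw [e1, e2, norm_mul, norm_mul, norm_mul, e3, norm_real, Real.norm_of_nonneg (by positivity)]
    at hdup
  have hpi : 0 < √Real.pi := by positivity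
  have hlogdup := congrArg Real.log hdup
  rw [Real.log_mul gh.ne' g1.ne', Real.log_mul (by positivity) hpi.ne',
    Real.log_mul g1'.ne' (by positivity), Real.log_rpow two_pos] at hlogdup
  set E := a + b - c - 1 / 2 with hE
  have hz1 : 0 < 1 + ‖z‖ := by positivity
  have hhalf : |Real.log (1 + ‖z / 2‖) - Real.log (1 + ‖z‖)| ≤ Real.log 2 := by
    have h1 : 0 < 1 + ‖z / 2‖ := by positivity
    have hu := Real.log_le_log h1 (by rw [hnorm2]; linarith [norm_nonneg z] : _ ≤ 1 + ‖z‖)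
    have hl := Real.log_le_log hz1
      (by rw [hnorm2]; linarith [norm_nonneg z] : _ ≤ 2 * (1 + ‖z / 2‖))
    rw [Real.log_mul two_ne_zero h1.ne'] at hl
    rw [abs_le]
    constructor <;> linarith [Real.log_pos one_lt_two]
  have hhalf' := mul_le_mul_of_nonneg_left hhalf (abs_nonneg (a + b - 3 / 2))
  rw [← abs_mul] at hhalf'
  have qq := abs_le.1 hhalf'
  have hpos : 0 < ‖Gamma (a + z / 2) * Gamma (b + z / 2) / Gamma (c + z)‖ := by
    rw [norm_div, norm_mul, add_comm (a : ℂ), add_comm (b : ℂ), add_comm (c : ℂ)]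
    positivity
  have hlog : Real.log ‖Gamma (a + z / 2) * Gamma (b + z / 2) / Gamma (c + z)‖ =
      Real.log ‖Gamma (z / 2 + a)‖ + Real.log ‖Gamma (z / 2 + b)‖ - Real.log ‖Gamma (z + c)‖ := by
    rw [norm_div, norm_mul, add_comm (a : ℂ), add_comm (b : ℂ), add_comm (c : ℂ),
      Real.log_div (by positivity) gc.ne', Real.log_mul ga.ne' gb.ne']
  have hexp (t : ℝ) : Real.exp t * 2 ^ (-z.re) * (1 + ‖z‖) ^ E =
      Real.exp (t + Real.log 2 * (-z.re) + Real.log (1 + ‖z‖) * E) := by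
    rw [Real.rpow_def_of_pos two_pos, Real.rpow_def_of_pos hz1, Real.exp_add, Real.exp_add]
  rw [hexp, hexp, ← Real.le_log_iff_exp_le hpos, ← Real.log_le_iff_le_exp hpos, hlog, hE]
  constructor <;> linarith
end
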